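/- Let R be a Noetherian ring and 𝔞, 𝔟 ideals of R with 𝔟 ⊆ Rad(𝔞) and dim R/𝔞 = 1. If M is a 𝔟-cofinite R-module, then H^i_𝔞(M) is 𝔞-cofinite for all i ≥ 0. -/

import Mathlib

open CategoryTheory

universe u

variable (R : Type u) [CommRing R]

/-- The `i`-th Ext module `Ext^i_R(N, M)` of `R`-modules. -/
noncomputable def extModule (i : ℕ) (N M : ModuleCat.{u} R) : ModuleCat.{u} R :=
  ((Ext R (ModuleCat.{u} R) i).obj (Opposite.op N)).obj M

/-- A module is weakly Laskerian if every quotient has finitely many associated primes. -/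
def IsWeaklyLaskerian (M : Type u) [AddCommGroup M] [Module R M] : Prop :=
  ∀ N : Submodule R M, (associatedPrimes R (M ⧸ N)).Finite

/-- `M` is `𝔞`-cofinite: `Supp M ⊆ V(𝔞)` and all `Ext^i_R(R/𝔞, M)` are finitely generated. -/
def IsCofinite (𝔞 : Ideal R) (M : ModuleCat.{u} R) : Prop :=
  Module.support R M ⊆ PrimeSpectrum.zeroLocus (𝔞 : Set R) ∧
    ∀ i : ℕ, Module.Finite R (extModule R i (ModuleCat.of R (R ⧸ 𝔞)) M)

/-- `M` is `𝔞`-weakly cofinite: `Supp M ⊆ V(𝔞)` and all `Ext^i_R(R/𝔞, M)` are weakly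
Laskerian. -/
def IsWeaklyCofinite (𝔞 : Ideal R) (M : ModuleCat.{u} R) : Prop :=
  Module.support R M ⊆ PrimeSpectrum.zeroLocus (𝔞 : Set R) ∧
    ∀ i : ℕ, IsWeaklyLaskerian R (extModule R i (ModuleCat.of R (R ⧸ 𝔞)) M)

/-- The Krull dimension of the support of a module. -/
noncomputable def suppDim (M : Type u) [AddCommGroup M] [Module R M] : WithBot ℕ∞ :=
  Order.krullDim (Module.support R M)

/-- The cohomological dimension `cd(𝔞, M) = sup {i | H^i_𝔞(M) ≠ 0}`, as an element of `ℕ∞`. -/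
noncomputable def cohomologicalDim (𝔞 : Ideal R) (M : ModuleCat.{u} R) : ℕ∞ :=
  ⨆ i ∈ {i : ℕ | Nontrivial ((localCohomology 𝔞 i).obj M)}, (i : ℕ∞)

/-- `p` is an attached prime of `M`: `p` is prime and is the annihilator of a quotient
of `M`. -/
def IsAttachedPrime (M : Type u) [AddCommGroup M] [Module R M] (p : Ideal R) : Prop :=
  p.IsPrime ∧ ∃ N : Submodule R M, p = Module.annihilator R (M ⧸ N)


namespace Cof
open Opposite

variable {R : Type u} [CommRing R]

/-- The class of a cocycle in the Ext module, computed by a projective resolution. -/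
noncomputable def cls {X : ModuleCat.{u} R} (P : ProjectiveResolution X) (n : ℕ) (Y : ModuleCat.{u} R) :
    (P.complex.linearYonedaObj R Y).cycles n ⟶ extModule R n X Y :=
  (P.complex.linearYonedaObj R Y).homologyπ n ≫ (P.isoExt n Y).inv

theorem glue {C : Type*} [Category C] {W W' U U' V V' : C} (a' : W' ⟶ U') (b' : U' ⟶ V')
    (e : V' ⟶ V) (w : W' ⟶ W) (a : W ⟶ U) (b : U ⟶ V) (m : U' ⟶ U)
    (h1 : b' ≫ e = m ≫ b) (h2 : a' ≫ m = w ≫ a) : (a' ≫ b') ≫ e = w ≫ (a ≫ b) := by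
  rw [Category.assoc, h1, ← Category.assoc, h2, Category.assoc]

theorem cls_nat {X X' : ModuleCat.{u} R} (g : X ⟶ X') (P : ProjectiveResolution X)
    (P' : ProjectiveResolution X') (φ : P.complex ⟶ P'.complex)
    (comm : φ.f 0 ≫ P'.π.f 0 = P.π.f 0 ≫ g) (n : ℕ) (Y : ModuleCat.{u} R) :
    ∃ ψ : P'.complex.linearYonedaObj R Y ⟶ P.complex.linearYonedaObj R Y,
      (∀ i (f : P'.complex.X i ⟶ Y), (ψ.f i).hom f = φ.f i ≫ f) ∧
      cls P' n Y ≫ ((Ext R (ModuleCat.{u} R) n).map g.op).app Y =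
        HomologicalComplex.cyclesMap ψ n ≫ cls P n Y := by
  let F := ((linearYoneda R (ModuleCat.{u} R)).obj Y).rightOp
  let ψ' := (F.mapHomologicalComplex (ComplexShape.down ℕ)).map φ
  let ψ : P'.complex.linearYonedaObj R Y ⟶ P.complex.linearYonedaObj R Y :=
    (HomologicalComplex.unopFunctor _ _).map ψ'.op
  refine ⟨ψ, fun i f => rfl, ?_⟩
  have h1 := P.isoLeftDerivedObj_hom_naturality g P' φ comm F n
  have h2 := HomologicalComplex.homologyOp_hom_naturality ψ n
  have h2' := congrArg Quiver.Hom.unop h2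
  have h1' := congrArg Quiver.Hom.unop h1
  have h3 : (P'.isoExt n Y).inv ≫ ((Ext R (ModuleCat.{u} R) n).map g.op).app Y
     = HomologicalComplex.homologyMap ψ n ≫ (P.isoExt n Y).inv :=
    glue (HomologicalComplex.homologyUnop _ n).hom (P'.isoLeftDerivedObj F n).hom.unop
      ((F.leftDerived n).map g).unop (HomologicalComplex.homologyMap ψ n)
      (HomologicalComplex.homologyUnop _ n).hom (P.isoLeftDerivedObj F n).hom.unop
      ((F.mapHomologicalComplex _ ⋙ HomologicalComplex.homologyFunctor _ _ n).map φ).unop h1' h2'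
  exact glue _ _ _ _ _ _ _ h3 (HomologicalComplex.homologyπ_naturality ψ n)

theorem cls_surj {X : ModuleCat.{u} R} (P : ProjectiveResolution X) (n : ℕ) (Y : ModuleCat.{u} R) :
    Function.Surjective (cls P n Y) := by
  have h1 : Function.Surjective ((P.complex.linearYonedaObj R Y).homologyπ n).hom :=
    (ModuleCat.epi_iff_surjective _).1 inferInstance
  have h2 : Function.Surjective (P.isoExt (R := R) n Y).inv.hom :=
    (ModuleCat.epi_iff_surjective _).1 inferInstance
  exact h2.comp h1

/-- underlying cochain of a cocycle -/
noncomputable def cyc {X : ModuleCat.{u} R} (P : ProjectiveResolution X) (n : ℕ) (Y : ModuleCat.{u} R)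
    (z : (P.complex.linearYonedaObj R Y).cycles n) : P.complex.X n ⟶ Y :=
  ((P.complex.linearYonedaObj R Y).iCycles n).hom z

theorem cyc_d {X : ModuleCat.{u} R} (P : ProjectiveResolution X) (n : ℕ) (Y : ModuleCat.{u} R)
    (z : (P.complex.linearYonedaObj R Y).cycles n) : P.complex.d (n+1) n ≫ cyc P n Y z = 0 := by
  have := congrArg (fun f => f.hom z) ((P.complex.linearYonedaObj R Y).iCycles_d n (n+1))
  exact this

theorem cyc_exists {X : ModuleCat.{u} R} (P : ProjectiveResolution X) (n : ℕ) (Y : ModuleCat.{u} R)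
    (f : P.complex.X n ⟶ Y) (hf : P.complex.d (n+1) n ≫ f = 0) :
    ∃ z, cyc P n Y z = f := by
  let K := P.complex.linearYonedaObj R Y
  let k : ModuleCat.of R R ⟶ K.X n := ModuleCat.ofHom (LinearMap.toSpanSingleton R (K.X n) f)
  have hk : k ≫ K.d n (n+1) = 0 := by
    apply ModuleCat.hom_ext
    apply LinearMap.ext_ring
    have : (K.d n (n+1)).hom f = 0 := hf
    change (K.d n (n+1)).hom ((1:R) • f) = 0
    rw [one_smul, this]
  refine ⟨(K.liftCycles k (n+1) (by simp) hk).hom (1:R), ?_⟩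
  have := congrArg (fun f => f.hom (1:R)) (K.liftCycles_i k (n+1) (by simp) hk)
  refine Eq.trans this ?_
  change (1:R) • f = f
  rw [one_smul]

theorem cyc_inj {X : ModuleCat.{u} R} (P : ProjectiveResolution X) (n : ℕ) (Y : ModuleCat.{u} R) :
    Function.Injective (cyc P n Y) :=
  (ModuleCat.mono_iff_injective ((P.complex.linearYonedaObj R Y).iCycles n)).1 inferInstance

/-- the map from cocycles to the derived Ext. -/
noncomputable def cls' {X : ModuleCat.{u} R} (P : ProjectiveResolution X) (n : ℕ) (Y : ModuleCat.{u} R) :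
    (P.complex.linearYonedaObj R Y).cycles n →ₗ[R] Abelian.Ext X Y n where
  toFun z := P.extMk (cyc P n Y z) (n+1) rfl (cyc_d P n Y z)
  map_add' z w := by
    rw [P.add_extMk]
    congr 1
    exact map_add ((P.complex.linearYonedaObj R Y).iCycles n).hom z w
  map_smul' r z := by
    rw [RingHom.id_apply, Abelian.Ext.smul_eq_comp_mk₀, P.extMk_comp_mk₀]
    congr 1
    refine (map_smul ((P.complex.linearYonedaObj R Y).iCycles n).hom r z).trans ?_
    rw [Linear.comp_smul, Category.comp_id]
    rfl

theorem cls'_surj {X : ModuleCat.{u} R} (P : ProjectiveResolution X) (n : ℕ) (Y : ModuleCat.{u} R) :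
    Function.Surjective (cls' P n Y) := by
  intro α
  obtain ⟨f, hf, rfl⟩ := P.extMk_surjective α (n+1) rfl
  obtain ⟨z, rfl⟩ := cyc_exists P n Y f hf
  exact ⟨z, rfl⟩

open CochainComplex.HomComplex in
theorem extMk_zero_iff {X Y : ModuleCat.{u} R} (P : ProjectiveResolution X)
    (f : P.complex.X 0 ⟶ Y) (hf : P.complex.d 1 0 ≫ f = 0) :
    P.extMk f 1 rfl hf = 0 ↔ f = 0 := by
  simp only [← P.extEquivCohomologyClass.apply_eq_iff_eq,
    ProjectiveResolution.extEquivCohomologyClass_extMk,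
    ProjectiveResolution.extEquivCohomologyClass_zero, CohomologyClass.mk_eq_zero_iff]
  rw [Cocycle.toSingleMk_mem_coboundaries_iff _ _ _ _ _ 1 (by simp)]
  have hz : Limits.IsZero (P.cochainComplex.X 1) := P.cochainComplex.isZero_of_isStrictlyLE 0 1 (by lia)
  constructor
  · rintro ⟨g, hg⟩
    rw [hz.eq_of_src g 0, Limits.comp_zero] at hg
    rw [← cancel_epi (P.cochainComplexXIso (-(0:ℕ)) 0 rfl).hom]
    simpa using hg.symm
  · rintro rfl
    exact ⟨0, by simp⟩

theorem ker_cls {X : ModuleCat.{u} R} (P : ProjectiveResolution X) (n : ℕ) (Y : ModuleCat.{u} R)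
    (z) : cls P n Y z = 0 ↔ cls' P n Y z = 0 := by
  let K := P.complex.linearYonedaObj R Y
  have h1 : cls P n Y z = 0 ↔ K.homologyπ n z = 0 := by
    have : Function.Injective (P.isoExt (R := R) n Y).inv :=
      (ModuleCat.mono_iff_injective _).1 inferInstance
    rw [← map_eq_zero_iff _ this]; rfl
  rw [h1]
  have ex : ∀ i, (ComplexShape.up ℕ).prev n = i → (K.homologyπ n z = 0 ↔ ∃ y, K.toCycles i n y = z) := by
    intro i hi
    have := (ShortComplex.exact_of_g_is_cokernel (ShortComplex.mk (K.toCycles i n) (K.homologyπ n) (K.toCycles_comp_homologyπ i n)) (K.homologyIsCokernel i n hi))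
    rw [ShortComplex.moduleCat_exact_iff] at this
    refine ⟨this z, ?_⟩
    rintro ⟨y, rfl⟩
    exact congrArg (fun f => f.hom y) (K.toCycles_comp_homologyπ i n)
  change _ ↔ P.extMk (cyc P n Y z) (n+1) rfl (cyc_d P n Y z) = 0
  rcases n with _ | p
  · rw [ex 0 (by simp)]
    have h0 : K.toCycles 0 0 = 0 := by
      apply K.toCycles_eq_zero; simp
    rw [h0, extMk_zero_iff P _ (cyc_d P 0 Y z)]
    constructor
    · rintro ⟨y, rfl⟩
      exact map_zero (K.iCycles 0).hom
    · intro h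
      refine ⟨0, (cyc_inj P 0 Y (h.trans ?_)).symm⟩
      exact (map_zero (K.iCycles 0).hom).symm
  · rw [ex p (by simp), P.extMk_eq_zero_iff _ _ _ _ p rfl]
    constructor
    · rintro ⟨y, rfl⟩
      refine ⟨y, ?_⟩
      exact (congrArg (fun f => f.hom y) (K.toCycles_i p (p+1))).symm
    · rintro ⟨y, hy⟩
      refine ⟨y, cyc_inj P _ Y ?_⟩
      rw [← hy]
      exact (congrArg (fun f => f.hom y) (K.toCycles_i p (p+1)))

/-- The two versions of Ext agree. -/
noncomputable def cmp (n : ℕ) (X Y : ModuleCat.{u} R) : extModule R n X Y ≃ₗ[R] Abelian.Ext X Y n :=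
  (LinearMap.quotKerEquivOfSurjective (cls (projectiveResolution X) n Y).hom
      (cls_surj (projectiveResolution X) n Y)).symm.trans
    ((Submodule.quotEquivOfEq _ _ (by
      ext z; exact ker_cls _ _ _ z)).trans
    (LinearMap.quotKerEquivOfSurjective (cls' (projectiveResolution X) n Y)
      (cls'_surj (projectiveResolution X) n Y)))

theorem cmp_cls (n : ℕ) (X Y : ModuleCat.{u} R) (z) :
    cmp n X Y (cls (projectiveResolution X) n Y z) = cls' (projectiveResolution X) n Y z := by
  have : (LinearMap.quotKerEquivOfSurjective (cls (projectiveResolution X) n Y).hom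
      (cls_surj (projectiveResolution X) n Y)).symm (cls (projectiveResolution X) n Y z) =
        Submodule.Quotient.mk z := by
    rw [LinearEquiv.symm_apply_eq]; rfl
  unfold cmp
  rw [LinearEquiv.trans_apply, this]
  rfl

theorem cmp_nat (n : ℕ) {X X' : ModuleCat.{u} R} (g : X ⟶ X') (Y : ModuleCat.{u} R)
    (α : extModule R n X' Y) :
    cmp n X Y ((((Ext R (ModuleCat.{u} R) n).map g.op).app Y).hom α) =
      (Abelian.Ext.mk₀ g).comp (cmp n X' Y α) (zero_add n) := by
  obtain ⟨z, rfl⟩ := cls_surj (projectiveResolution X') n Y α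
  let P := projectiveResolution X
  let P' := projectiveResolution X'
  let φ := ProjectiveResolution.lift g P P'
  obtain ⟨ψ, h1, h2⟩ := cls_nat g P P' φ (ProjectiveResolution.lift_commutes_zero g P P') n Y
  have h3 := congrArg (fun f => f.hom z) h2
  have h4 : (((Ext R (ModuleCat.{u} R) n).map g.op).app Y).hom (cls P' n Y z) =
    cls P n Y ((HomologicalComplex.cyclesMap ψ n).hom z) := h3
  rw [h4, cmp_cls, cmp_cls]
  let Φ : ProjectiveResolution.Hom P P' g := ⟨φ, ProjectiveResolution.lift_commutes_zero g P P'⟩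
  refine Eq.trans ?_ (ProjectiveResolution.mk₀_comp_extMk (cyc P' n Y z) (n+1) rfl (cyc_d P' n Y z) Φ).symm
  change P.extMk (cyc P n Y _) (n+1) rfl (cyc_d P n Y _) = _
  congr 1
  have h5 := congrArg (fun f => f.hom z) (HomologicalComplex.cyclesMap_i ψ n)
  exact h5.trans (h1 n _)

end Cof


namespace Cof

variable {R : Type u} [CommRing R]

/-- finite generation of Ext^i(X,N). -/
abbrev FE (R : Type u) [CommRing R] (X N : Type u) [AddCommGroup X] [Module R X] [AddCommGroup N]
    [Module R N] (i : ℕ) : Prop :=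
  Module.Finite R (Abelian.Ext (ModuleCat.of R X) (ModuleCat.of R N) i)

theorem finite_mid [IsNoetherianRing R] {U V W : Type*} [AddCommGroup U] [AddCommGroup V]
    [AddCommGroup W] [Module R U] [Module R V] [Module R W] (f : U →ₗ[R] V) (g : V →ₗ[R] W)
    (h : ∀ v, g v = 0 → ∃ u, f u = v) (hU : Module.Finite R U) (hW : Module.Finite R W) :
    Module.Finite R V := by
  have : IsNoetherian R U := inferInstance
  have : IsNoetherian R W := inferInstance
  let K := LinearMap.ker g
  have h1 : K.FG := by
    have : K ≤ LinearMap.range f := fun v hv => h v hv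
    have : IsNoetherian R (LinearMap.range f) := inferInstance
    exact (isNoetherian_submodule.1 this) K ‹_›
  have h2 : (Submodule.map g ⊤).FG := IsNoetherian.noetherian _
  refine ⟨Submodule.fg_of_fg_map_of_fg_inf_ker g h2 (by simpa using h1)⟩

section LES
variable {A B C X Y : Type u} [AddCommGroup A] [AddCommGroup B] [AddCommGroup C]
  [AddCommGroup X] [AddCommGroup Y] [Module R A] [Module R B] [Module R C] [Module R X] [Module R Y]
  (f : A →ₗ[R] B) (g : B →ₗ[R] C) (hf : Function.Injective f) (hg : Function.Surjective g)
  (hfg : Function.Exact f g)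

/-- short complex -/
def sc : ShortComplex (ModuleCat.{u} R) :=
  ShortComplex.mk (ModuleCat.ofHom f) (ModuleCat.ofHom g) (by
    ext x; exact hfg.apply_apply_eq_zero x)

include hf hg in
theorem sc_exact : (sc f g hfg).ShortExact :=
  ModuleCat.shortComplex_shortExact _ hfg hf hg

include hf hg hfg
variable [IsNoetherianRing R]

theorem cov_mid (i : ℕ) (h1 : FE R X A i) (h2 : FE R X C i) : FE R X B i := by
  have hS := sc_exact f g hf hg hfg
  exact finite_mid ((Abelian.Ext.mk₀ (sc f g hfg).f).postcompOfLinear R (ModuleCat.of R X) (add_zero i))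
    ((Abelian.Ext.mk₀ (sc f g hfg).g).postcompOfLinear R (ModuleCat.of R X) (add_zero i))
    (fun v hv => Abelian.Ext.covariant_sequence_exact₂ _ hS v hv) h1 h2

theorem cov_right (i : ℕ) (h1 : FE R X B i) (h2 : FE R X A (i+1)) : FE R X C i := by
  have hS := sc_exact f g hf hg hfg
  exact finite_mid ((Abelian.Ext.mk₀ (sc f g hfg).g).postcompOfLinear R (ModuleCat.of R X) (add_zero i))
    (hS.extClass.postcompOfLinear R (ModuleCat.of R X) rfl)
    (fun v hv => Abelian.Ext.covariant_sequence_exact₃ _ hS v rfl hv) h1 h2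

theorem cov_left (i : ℕ) (h1 : FE R X C i) (h2 : FE R X B (i+1)) : FE R X A (i+1) := by
  have hS := sc_exact f g hf hg hfg
  exact finite_mid (hS.extClass.postcompOfLinear R (ModuleCat.of R X) rfl)
    ((Abelian.Ext.mk₀ (sc f g hfg).f).postcompOfLinear R (ModuleCat.of R X) (add_zero (i+1)))
    (fun v hv => Abelian.Ext.covariant_sequence_exact₁ _ hS v hv rfl) h1 h2

theorem contra_mid (i : ℕ) (h1 : FE R A Y i) (h2 : FE R C Y i) : FE R B Y i := by
  have hS := sc_exact f g hf hg hfg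
  exact finite_mid ((Abelian.Ext.mk₀ (sc f g hfg).g).precompOfLinear R (ModuleCat.of R Y) (zero_add i))
    ((Abelian.Ext.mk₀ (sc f g hfg).f).precompOfLinear R (ModuleCat.of R Y) (zero_add i))
    (fun v hv => Abelian.Ext.contravariant_sequence_exact₂ hS _ v hv) h2 h1

theorem contra_right (i : ℕ) (h1 : FE R A Y i) (h2 : FE R B Y (i+1)) : FE R C Y (i+1) := by
  have hS := sc_exact f g hf hg hfg
  exact finite_mid (hS.extClass.precompOfLinear R (ModuleCat.of R Y) (add_comm 1 i))
    ((Abelian.Ext.mk₀ (sc f g hfg).g).precompOfLinear R (ModuleCat.of R Y) (zero_add (i+1)))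
    (fun v hv => Abelian.Ext.contravariant_sequence_exact₃ hS _ v hv (add_comm 1 i)) h1 h2

end LES

section
variable {A B X Y : Type u} [AddCommGroup A] [AddCommGroup B] 
  [AddCommGroup X] [AddCommGroup Y] [Module R A] [Module R B] [Module R X] [Module R Y]

/-- Ext^0 is Hom -/
noncomputable def ext0 (X Y : Type u) [AddCommGroup X] [AddCommGroup Y] [Module R X] [Module R Y] :
    Abelian.Ext (ModuleCat.of R X) (ModuleCat.of R Y) 0 ≃ₗ[R] (X →ₗ[R] Y) :=
  Abelian.Ext.linearEquiv₀.trans ModuleCat.homLinearEquiv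

theorem FE0_iff : FE R X Y 0 ↔ Module.Finite R (X →ₗ[R] Y) :=
  Module.Finite.equiv_iff (ext0 X Y)

theorem FE0_right [IsNoetherianRing R] (g : A →ₗ[R] B) (hg : Function.Surjective g)
    (h : FE R A Y 0) : FE R B Y 0 := by
  rw [FE0_iff] at *
  refine Module.Finite.of_injective (LinearMap.lcomp R Y g) ?_
  intro u v h
  ext b
  obtain ⟨a, rfl⟩ := hg b
  exact LinearMap.congr_fun h a

theorem FE_subsingleton_left [Subsingleton X] (i : ℕ) : FE R X Y i := by
  have hz : Limits.IsZero (ModuleCat.of R X) := ModuleCat.isZero_of_subsingleton _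
  have : Subsingleton (Abelian.Ext (ModuleCat.of R X) (ModuleCat.of R Y) i) := by
    constructor
    intro a b
    have : ∀ a : Abelian.Ext (ModuleCat.of R X) (ModuleCat.of R Y) i, a = 0 := by
      intro a
      rw [← Abelian.Ext.mk₀_id_comp a, hz.eq_of_src (𝟙 _) 0, Abelian.Ext.mk₀_zero, Abelian.Ext.zero_comp]
    rw [this a, this b]
  infer_instance

theorem FE_congr_left (e : A ≃ₗ[R] B) (i : ℕ) (h : FE R A Y i) : FE R B Y i := by
  refine Module.Finite.of_surjective
    ((Abelian.Ext.mk₀ (ModuleCat.ofHom (e.symm : B →ₗ[R] A))).precompOfLinear R (ModuleCat.of R Y) (zero_add i)) ?_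
  intro v
  refine ⟨(Abelian.Ext.mk₀ (ModuleCat.ofHom (e : A →ₗ[R] B))).comp v (zero_add i), ?_⟩
  change (Abelian.Ext.mk₀ _).comp _ (zero_add i) = _
  rw [Abelian.Ext.mk₀_comp_mk₀_assoc]
  have : ModuleCat.ofHom (e.symm : B →ₗ[R] A) ≫ ModuleCat.ofHom (e : A →ₗ[R] B) = 𝟙 _ := by
    ext x; simp
  rw [this, Abelian.Ext.mk₀_id_comp]

theorem FE_congr_right (e : A ≃ₗ[R] B) (i : ℕ) (h : FE R X A i) : FE R X B i := by
  refine Module.Finite.of_surjective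
    ((Abelian.Ext.mk₀ (ModuleCat.ofHom (e : A →ₗ[R] B))).postcompOfLinear R (ModuleCat.of R X) (add_zero i)) ?_
  intro v
  refine ⟨v.comp (Abelian.Ext.mk₀ (ModuleCat.ofHom (e.symm : B →ₗ[R] A))) (add_zero i), ?_⟩
  change (Abelian.Ext.comp _ _ _).comp (Abelian.Ext.mk₀ _) (add_zero i) = _
  rw [Abelian.Ext.comp_assoc_of_second_deg_zero, Abelian.Ext.mk₀_comp_mk₀]
  have : ModuleCat.ofHom (e.symm : B →ₗ[R] A) ≫ ModuleCat.ofHom (e : A →ₗ[R] B) = 𝟙 _ := by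
    ext x; simp
  rw [this, Abelian.Ext.comp_mk₀_id]

end

theorem ext_transfer [IsNoetherianRing R] (b : Ideal R) (M : Type u) [AddCommGroup M] [Module R M]
    (h : ∀ j, FE R (R ⧸ b) M j) (j : ℕ) : ∀ (N : Type u) [AddCommGroup N] [Module R N],
    Module.Finite R N → (∃ n : ℕ, ∀ r ∈ b ^ n, ∀ x : N, r • x = 0) → FE R N M j := by
  induction j using Nat.strong_induction_on with
  | _ j ih =>
  intro N _ _ hN
  induction hN using IsNoetherianRing.induction_on_isQuotientEquivQuotientPrime R with
  | subsingleton N => intro _; exact FE_subsingleton_left j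
  | quotient N p e =>
    rintro ⟨n, hn⟩
    have hb : b ≤ p.1 := by
      refine p.2.le_of_pow_le (n := n) fun r hr => ?_
      have := hn r hr (e.symm 1)
      rw [← map_smul, map_eq_zero_iff _ e.symm.injective] at this
      rw [← Ideal.Quotient.eq_zero_iff_mem]
      simpa [Algebra.smul_def] using this
    refine FE_congr_left e.symm j ?_
    let g : (R ⧸ b) →ₗ[R] (R ⧸ p.1) := Submodule.factor hb
    have hg : Function.Surjective g := Submodule.factor_surjective hb
    rcases j with _ | j
    · exact FE0_right g hg (h 0)
    · refine contra_right (LinearMap.ker g).subtype g (Submodule.injective_subtype _) hg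
        (LinearMap.exact_subtype_ker_map g) j (ih j (by omega) _ inferInstance ⟨1, ?_⟩) (h _)
      rintro r hr ⟨x, hx⟩
      ext
      obtain ⟨x, rfl⟩ := Submodule.Quotient.mk_surjective _ x
      change r • Submodule.Quotient.mk x = 0
      rw [← Submodule.Quotient.mk_smul, Submodule.Quotient.mk_eq_zero]
      rw [pow_one] at hr
      exact b.mul_mem_right _ hr
  | exact N₁ N₂ N₃ f g hf hg hfg h1 h3 =>
    rintro ⟨n, hn⟩
    refine contra_mid f g hf hg hfg j (h1 ⟨n, fun r hr x => hf ?_⟩) (h3 ⟨n, fun r hr x => ?_⟩)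
    · rw [map_smul, hn r hr, map_zero]
    · obtain ⟨x, rfl⟩ := hg x
      rw [← map_smul, hn r hr, map_zero]

end Cof


namespace Cof

section Art
variable {R : Type*} [CommRing R] (R' : Type*) [CommRing R'] [Algebra R R']
  {A : Type*} [AddCommGroup A] [Module R A] [Module R' A] [IsScalarTower R R' A]

theorem smul_comm_tower (r : R) (r' : R') (x : A) : r • r' • x = r' • r • x := by
  rw [← algebraMap_smul R' r, ← algebraMap_smul R' r, smul_smul, smul_smul, mul_comm]

/-- multiplication by x -/
def mx (x : R) : A →ₗ[R'] A where
  toFun := fun y => x • y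
  map_add' := smul_add x
  map_smul' r y := smul_comm_tower R' x r y

/-- elements killed by I. -/
def tor (A : Type*) [AddCommGroup A] [Module R A] [Module R' A] [IsScalarTower R R' A] (I : Ideal R) :
    Submodule R' A where
  carrier := {x | ∀ r ∈ I, r • x = 0}
  add_mem' h1 h2 r hr := by rw [smul_add, h1 r hr, h2 r hr, add_zero]
  zero_mem' r hr := smul_zero r
  smul_mem' c x h r hr := by rw [smul_comm_tower, h r hr, smul_zero]

variable {R'} in
@[simp] theorem mem_tor {I : Ideal R} {x : A} : x ∈ tor R' A I ↔ ∀ r ∈ I, r • x = 0 := Iff.rfl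

theorem art_one (x : R) (ht : ∀ y : A, ∃ n : ℕ, x ^ n • y = 0)
    (h : IsArtinian R' (LinearMap.ker (mx R' x : A →ₗ[R'] A))) : IsArtinian R' A := by
  rw [← monotone_stabilizes_iff_artinian]
  intro f
  let K : Submodule R' A := LinearMap.ker (mx R' x : A →ₗ[R'] A)
  let f' : ℕ → Submodule R' A := fun n => OrderDual.ofDual (f n)
  have hf' : ∀ {i j}, i ≤ j → f' j ≤ f' i := fun hij => f.monotone hij
  let g : ℕ → ℕ → Submodule R' K := fun k n =>
    ((f' k).map (mx R' (x ^ n) : A →ₗ[R'] A)).comap K.subtype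
  have hg : ∀ {k k' n n'}, k ≤ k' → n ≤ n' → g k' n' ≤ g k n := by
    intro k k' n n' hk hn y hy
    obtain ⟨l, hl, h2⟩ := hy
    refine ⟨x ^ (n' - n) • l, hf' hk ?_, ?_⟩
    · rw [← algebraMap_smul R' (x ^ (n' - n)) l]
      exact (f' k').smul_mem _ hl
    · rw [← h2]
      change x ^ n • x ^ (n' - n) • l = x ^ n' • l
      rw [smul_smul, ← pow_add, Nat.add_sub_cancel' hn]
  have stab : ∀ φ : ℕ → Submodule R' K, (∀ i j, i ≤ j → φ j ≤ φ i) → ∃ n, ∀ m, n ≤ m → φ n = φ m := by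
    intro φ hφ
    exact monotone_stabilizes_iff_artinian.2 h ⟨fun n => OrderDual.toDual (φ n), fun i j hij => hφ i j hij⟩
  obtain ⟨k0, hk0⟩ := stab (fun k => g k k) (fun i j hij => hg hij hij)
  have : ∀ n, ∃ k, ∀ m, k ≤ m → g k n = g m n := fun n => stab (fun k => g k n) (fun i j hij => hg hij le_rfl)
  choose kk hkk using this
  let Kk := max k0 ((Finset.range k0).sup kk)
  have key : ∀ m, Kk ≤ m → ∀ n, g Kk n = g m n := by
    intro m hm n
    by_cases hn : n < k0
    · have h1 : kk n ≤ Kk := le_trans (Finset.le_sup (f := kk) (Finset.mem_range.2 hn)) (le_max_right _ _)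
      rw [← hkk n Kk h1, ← hkk n m (h1.trans hm)]
    · push Not at hn
      have h0 : k0 ≤ Kk := le_max_left _ _
      have hh : ∀ m, k0 ≤ m → g m n = g k0 k0 := by
        intro m hm
        apply le_antisymm (hg hm hn)
        rw [hk0 (max m n) (le_trans hm (le_max_left _ _))]
        exact hg (le_max_left _ _) (le_max_right _ _)
      rw [hh m (h0.trans hm), hh Kk h0]
  refine ⟨Kk, fun m hm => ?_⟩
  change f' Kk = f' m
  apply le_antisymm _ (hf' hm)
  intro y hy
  obtain ⟨n, hn⟩ := ht y
  induction n generalizing y with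
  | zero => rw [pow_zero, one_smul] at hn; rw [hn]; exact zero_mem _
  | succ n ih =>
    have hyK : x ^ n • y ∈ K := by
      change x • x ^ n • y = 0
      rw [smul_smul, ← pow_succ', hn]
    have : (⟨x ^ n • y, hyK⟩ : K) ∈ g Kk n := ⟨y, hy, rfl⟩
    rw [key m hm n] at this
    obtain ⟨y', hy', h2⟩ := this
    have h2 : x ^ n • y' = x ^ n • y := h2
    have := ih (y := y - y') (sub_mem hy (hf' hm hy')) (by rw [smul_sub, h2, sub_self])
    have := add_mem this hy'
    simpa using this

/-- elements killed by a set. -/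
def torS (A : Type*) [AddCommGroup A] [Module R A] [Module R' A] [IsScalarTower R R' A] (s : Set R) :
    Submodule R' A where
  carrier := {x | ∀ r ∈ s, r • x = 0}
  add_mem' h1 h2 r hr := by rw [smul_add, h1 r hr, h2 r hr, add_zero]
  zero_mem' r hr := smul_zero r
  smul_mem' c x h r hr := by rw [smul_comm_tower, h r hr, smul_zero]

theorem art_fin (s : Finset R) : ∀ B : Submodule R' A, (∀ x ∈ s, ∀ y ∈ B, ∃ n : ℕ, x ^ n • y = 0) →
    IsArtinian R' ↥(B ⊓ torS R' A (s : Set R)) → IsArtinian R' B := by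
  classical
  induction s using Finset.induction with
  | empty =>
    intro B _ h
    have : B ⊓ torS R' A ((∅ : Finset R) : Set R) = B := by
      apply inf_eq_left.2
      intro y hy r hr
      simp at hr
    rwa [this] at h
  | insert x s hx ih =>
    intro B ht h
    have hsm : ∀ (r : R) (b : B), ((r • b : B) : A) = r • (b : A) := fun r b => rfl
    have h1 : IsArtinian R' ↥(B ⊓ LinearMap.ker (mx R' x : A →ₗ[R'] A)) := by
      apply ih
      · intro x hx y hy
        exact ht x (Finset.mem_insert_of_mem hx) y hy.1
      · refine isArtinian_of_le (t := B ⊓ torS R' A ((insert x s : Finset R) : Set R)) ?_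
        rintro y ⟨⟨h1, h2⟩, h3⟩
        refine ⟨h1, fun r hr => ?_⟩
        rw [Finset.coe_insert] at hr
        rcases hr with rfl | hr
        · exact h2
        · exact h3 r hr
    refine art_one R' (A := B) x (fun y => ?_) ?_
    · obtain ⟨n, hn⟩ := ht x (Finset.mem_insert_self _ _) y y.2
      refine ⟨n, Subtype.ext ?_⟩
      rw [hsm, hn]; rfl
    · let e : LinearMap.ker (mx R' x : B →ₗ[R'] B) →ₗ[R'] ↥(B ⊓ LinearMap.ker (mx R' x : A →ₗ[R'] A)) :=
        LinearMap.codRestrict _ (B.subtype ∘ₗ Submodule.subtype _) (by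
          rintro ⟨y, hy⟩
          refine ⟨y.2, ?_⟩
          have := congrArg Subtype.val (show x • y = 0 from hy)
          rw [hsm] at this
          exact this)
      refine isArtinian_of_injective e ?_
      intro y z h
      have h3 : ((e y : _) : A) = e z := by rw [h]
      exact Subtype.ext (Subtype.ext h3)

theorem art_of_tor (I : Ideal R) (hI : I.FG) (ht : ∀ y : A, ∃ n : ℕ, ∀ r ∈ I ^ n, r • y = 0)
    (h : IsArtinian R' (tor R' A I)) : IsArtinian R' A := by
  obtain ⟨s, rfl⟩ := hI
  have := art_fin R' (A := A) s ⊤ (by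
    intro x hx y _
    obtain ⟨n, hn⟩ := ht y
    exact ⟨n, hn _ (Ideal.pow_mem_pow (Ideal.subset_span hx) n)⟩) (by
    refine isArtinian_of_le (t := tor R' A (Ideal.span (s : Set R))) ?_
    rintro y ⟨-, hy⟩ r hr
    refine Submodule.span_induction (p := fun r _ => r • y = 0) ?_ ?_ ?_ ?_ hr
    · exact fun x hx => hy x hx
    · exact zero_smul _ _
    · intro a b _ _ ha hb; rw [add_smul, ha, hb, add_zero]
    · intro a b _ hb; rw [smul_assoc, hb, smul_zero])
  exact isArtinian_of_linearEquiv (Submodule.topEquiv (R := R') (M := A))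

theorem noeth_tor_pow (I : Ideal R) (hI : I.FG) (h : IsNoetherian R' (tor R' A I)) (n : ℕ) :
    IsNoetherian R' (tor R' A (I ^ n)) := by
  induction n with
  | zero =>
    have : tor R' A (I ^ 0) = ⊥ := by
      rw [eq_bot_iff]
      intro x hx
      have := hx 1 (by simp)
      simpa using this
    rw [this]; infer_instance
  | succ n ih =>
    obtain ⟨s, hs⟩ := hI
    let F : tor R' A (I ^ (n+1)) →ₗ[R'] (s → tor R' A (I ^ n)) :=
      LinearMap.pi fun r => LinearMap.codRestrict _ (mx R' r.1 ∘ₗ Submodule.subtype _) (by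
        rintro ⟨x, hx⟩ t ht
        change t • r.1 • x = 0
        rw [smul_smul]
        apply hx
        rw [pow_succ]
        exact Ideal.mul_mem_mul ht (hs ▸ Ideal.subset_span r.2))
    let G : LinearMap.ker F →ₗ[R'] tor R' A I :=
      LinearMap.codRestrict _ (Submodule.subtype _ ∘ₗ Submodule.subtype _) (by
        rintro ⟨⟨x, hx⟩, hx'⟩ r hr
        change r • x = 0
        rw [← hs] at hr
        refine Submodule.span_induction (p := fun r _ => r • x = 0) ?_ ?_ ?_ ?_ hr
        · intro y hy
          have := congrFun (show F ⟨x, hx⟩ = 0 from hx') ⟨y, hy⟩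
          exact congrArg Subtype.val this
        · exact zero_smul _ _
        · intro a b _ _ ha hb; rw [add_smul, ha, hb, add_zero]
        · intro a b _ hb; rw [smul_assoc, hb, smul_zero])
    have hk : IsNoetherian R' (LinearMap.ker F) := by
      refine isNoetherian_of_injective G ?_
      intro y z h
      have h3 : ((G y : _) : A) = G z := by rw [h]
      exact Subtype.ext (Subtype.ext h3)
    exact isNoetherian_of_range_eq_ker (LinearMap.ker F).subtype F (by simp)

end Art
end Cof


namespace Cof

section Art
variable {R : Type*} [CommRing R] (R' : Type*) [CommRing R'] [Algebra R R']
  {A : Type*} [AddCommGroup A] [Module R A] [Module R' A] [IsScalarTower R R' A]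

theorem smul_mem_tower {C : Submodule R' A} (r : R) {y : A} (hy : y ∈ C) : r • y ∈ C := by
  rw [← algebraMap_smul R' r y]
  exact C.smul_mem _ hy

theorem map_mx_le (C : Submodule R' A) (r : R) : C.map (mx R' r) ≤ C := by
  rintro _ ⟨y, hy, rfl⟩
  exact smul_mem_tower R' r hy

theorem fitting [IsArtinian R' A] (C : Submodule R' A) (hC : SupIrred C) (r : R) :
    C.map (mx R' r) = C ∨ ∃ n : ℕ, ∀ y ∈ C, r ^ n • y = 0 := by
  let φ : ℕ →o (Submodule R' A)ᵒᵈ := ⟨fun n => OrderDual.toDual (C.map (mx R' (r ^ n))), by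
    intro i j hij
    change C.map (mx R' (r ^ j)) ≤ C.map (mx R' (r ^ i))
    rintro _ ⟨y, hy, rfl⟩
    refine ⟨r ^ (j - i) • y, smul_mem_tower R' _ hy, ?_⟩
    change r ^ i • r ^ (j - i) • y = r ^ j • y
    rw [smul_smul, ← pow_add, Nat.add_sub_cancel' hij]⟩
  obtain ⟨n, hn⟩ := IsArtinian.monotone_stabilizes φ
  have hn : ∀ m, n ≤ m → C.map (mx R' (r ^ n)) = C.map (mx R' (r ^ m)) := hn
  have h1 : C.map (mx R' (r ^ n)) ⊔ (C ⊓ LinearMap.ker (mx R' (r ^ n) : A →ₗ[R'] A)) = C := by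
    apply le_antisymm (sup_le (map_mx_le R' C _) inf_le_left)
    intro y hy
    have : r ^ n • y ∈ C.map (mx R' (r ^ (n + n))) := by
      rw [← hn (n+n) (by omega)]; exact ⟨y, hy, rfl⟩
    obtain ⟨z, hz, h2⟩ := this
    have h2 : r ^ (n + n) • z = r ^ n • y := h2
    have : y = r ^ n • z + (y - r ^ n • z) := by abel
    rw [this]
    refine Submodule.add_mem_sup ⟨z, hz, rfl⟩ ⟨sub_mem hy (smul_mem_tower R' _ hz), ?_⟩
    change r ^ n • (y - r ^ n • z) = 0
    rw [smul_sub, smul_smul, ← pow_add, h2, sub_self]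
  rcases hC.2 h1 with h2 | h2
  · left
    apply le_antisymm (map_mx_le R' C _)
    have h3 := hn (n+1) (by omega)
    rw [← h2, h3]
    rintro _ ⟨y, hy, rfl⟩
    have hy' : y ∈ C := h2 ▸ (hn (n+1) (by omega)) ▸ (by simpa [h2, ← h3] using hy)
    refine ⟨r ^ n • y, ?_, ?_⟩
    · rw [← h3]; exact ⟨y, hy', rfl⟩
    · change r • r ^ n • y = r ^ (n+1) • y
      rw [smul_smul, ← pow_succ']
  · right
    refine ⟨n, fun y hy => ?_⟩
    rw [← h2] at hy
    exact hy.2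

/-- annihilator in R of a submodule -/
def annR (C : Submodule R' A) : Ideal R where
  carrier := {r | ∀ y ∈ C, r • y = 0}
  add_mem' h1 h2 y hy := by rw [add_smul, h1 y hy, h2 y hy, add_zero]
  zero_mem' y _ := zero_smul _ _
  smul_mem' c r h y hy := by rw [smul_assoc, h y hy, smul_zero]

theorem prime_annR [IsArtinian R' A] (C : Submodule R' A) (hC : SupIrred C) :
    ((annR R' C).radical : Ideal R).IsPrime := by
  have hne : C ≠ ⊥ := fun h => hC.1 (h ▸ isMin_bot)
  have key : ∀ r : R, r ∉ (annR R' C).radical → C.map (mx R' r) = C := by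
    intro r hr
    rcases fitting R' C hC r with h | ⟨n, hn⟩
    · exact h
    · exact absurd ⟨n, hn⟩ hr
  have hpow : ∀ r : R, C.map (mx R' r) = C → ∀ n : ℕ, C.map (mx R' (r ^ n)) = C := by
    intro r hr n
    apply le_antisymm (map_mx_le R' C _)
    induction n with
    | zero => intro y hy; exact ⟨y, hy, by change r ^ 0 • y = y; simp⟩
    | succ n ih =>
      intro y hy
      obtain ⟨z, hz, rfl⟩ := ih hy
      rw [SetLike.mem_coe, ← hr] at hz
      obtain ⟨w, hw, rfl⟩ := hz
      refine ⟨w, hw, ?_⟩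
      change r ^ (n+1) • w = r ^ n • r • w
      rw [smul_smul, pow_succ]
  constructor
  · intro h
    obtain ⟨n, hn⟩ := (Ideal.eq_top_iff_one _).1 h
    rw [one_pow] at hn
    apply hne
    rw [eq_bot_iff]
    intro y hy
    have := hn y hy
    simpa using this
  · intro r s hrs
    by_contra! hcon
    have h1 := key r hcon.1
    have h2 := key s hcon.2
    obtain ⟨n, hn⟩ := hrs
    apply hne
    rw [eq_bot_iff]
    intro y hy
    have h3 := hpow (r * s) (by
      apply le_antisymm (map_mx_le R' C _)
      intro y hy
      rw [← h1] at hy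
      obtain ⟨z, hz, rfl⟩ := hy
      rw [SetLike.mem_coe, ← h2] at hz
      obtain ⟨w, hw, rfl⟩ := hz
      refine ⟨w, hw, ?_⟩
      change (r * s) • w = r • s • w
      rw [smul_smul]) n
    rw [← h3] at hy
    obtain ⟨z, hz, rfl⟩ := hy
    exact hn z hz

theorem exists_elt [IsNoetherianRing R] [IsArtinian R' A] (a c : Ideal R) (hca : ¬ a ≤ c)
    (h : IsNoetherian R' (tor R' A a)) :
    ∃ x ∈ a, x ∉ c ∧ IsNoetherian R' (A ⧸ LinearMap.range (mx R' x : A →ₗ[R'] A)) := by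
  classical
  obtain ⟨s, hs, hirr⟩ := exists_supIrred_decomposition (⊤ : Submodule R' A)
  let q : Submodule R' A → Ideal R := fun C => (annR R' C).radical
  let t : Finset (Ideal R) := insert c ((s.filter fun C => ¬ a ≤ q C).image q)
  have hav : ¬ ((a : Set R) ⊆ ⋃ i ∈ (t : Set (Ideal R)), (i : Set R)) := by
    intro hcon
    obtain ⟨i, hi, hai⟩ := (Ideal.subset_union_prime (f := fun i : Ideal R => i) c c (by
      intro i hi h1 _
      rw [Finset.mem_insert] at hi
      rcases hi with hi | hi
      · exact absurd hi h1
      · obtain ⟨C, hC, rfl⟩ := Finset.mem_image.1 hi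
        exact prime_annR R' C (hirr (Finset.mem_filter.1 hC).1))).1 hcon
    rw [Finset.mem_insert] at hi
    rcases hi with hi | hi
    · exact hca (hi ▸ hai)
    · obtain ⟨C, hC, rfl⟩ := Finset.mem_image.1 hi
      exact (Finset.mem_filter.1 hC).2 hai
  rw [Set.not_subset] at hav
  obtain ⟨x, hxa, hx⟩ := hav
  simp only [Set.mem_iUnion, not_exists] at hx
  refine ⟨x, hxa, hx c (by simp [t]), ?_⟩
  have h1 : ∀ C ∈ s, C ≤ LinearMap.range (mx R' x : A →ₗ[R'] A) ∨ ∃ n, C ≤ tor R' A (a ^ n) := by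
    intro C hC
    by_cases haC : a ≤ q C
    · right
      obtain ⟨n, hn⟩ := Ideal.exists_pow_le_of_le_radical_of_fg haC (IsNoetherian.noetherian a)
      exact ⟨n, fun y hy r hr => hn hr y hy⟩
    · left
      have hxq : x ∉ q C := hx (q C) (by simp only [t, Finset.coe_insert]; right; exact_mod_cast Finset.mem_image_of_mem _ (Finset.mem_filter.2 ⟨hC, haC⟩))
      rcases fitting R' C (hirr hC) x with h | ⟨n, hn⟩
      · rw [← h]; exact LinearMap.map_le_range
      · exact absurd ⟨n, hn⟩ hxq
  have h2 : ∃ N, ∀ C ∈ s, C ≤ LinearMap.range (mx R' x : A →ₗ[R'] A) ⊔ tor R' A (a ^ N) := by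
    have : ∀ C, ∃ n, C ∈ s → C ≤ LinearMap.range (mx R' x : A →ₗ[R'] A) ⊔ tor R' A (a ^ n) := by
      intro C
      by_cases hC : C ∈ s
      · rcases h1 C hC with h | ⟨n, h⟩
        · exact ⟨0, fun _ => h.trans le_sup_left⟩
        · exact ⟨n, fun _ => h.trans le_sup_right⟩
      · exact ⟨0, fun h => absurd h hC⟩
    choose n hn using this
    refine ⟨s.sup n, fun C hC => (hn C hC).trans (sup_le_sup_left ?_ _)⟩
    intro y hy r hr
    exact hy r (Ideal.pow_le_pow_right (Finset.le_sup hC) hr)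
  obtain ⟨N, hN⟩ := h2
  have h3 : LinearMap.range (mx R' x : A →ₗ[R'] A) ⊔ tor R' A (a ^ N) = ⊤ := by
    rw [eq_top_iff, ← hs]
    exact Finset.sup_le hN
  have := noeth_tor_pow R' a (IsNoetherian.noetherian a) h N
  refine isNoetherian_of_surjective ((Submodule.mkQ _) ∘ₗ Submodule.subtype (tor R' A (a ^ N))) ?_
  rw [LinearMap.range_eq_top]
  intro y
  obtain ⟨y, rfl⟩ := Submodule.mkQ_surjective _ y
  obtain ⟨u, hu, v, hv, rfl⟩ := Submodule.mem_sup.1 (h3 ▸ Submodule.mem_top : y ∈ _ ⊔ _)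
  refine ⟨⟨v, hv⟩, ?_⟩
  simpa using hu

end Art
end Cof


namespace Cof
section D
variable {R : Type u} [CommRing R]

theorem zero_act (a : Ideal R) {N : Type u} [AddCommGroup N] [Module R N] {i : ℕ} {x : R} (hx : x ∈ a)
    (α : Abelian.Ext (ModuleCat.of R (R ⧸ a)) (ModuleCat.of R N) i) : x • α = 0 := by
  have h : x • 𝟙 (ModuleCat.of R (R ⧸ a)) = 0 := by
    apply ModuleCat.hom_ext
    apply LinearMap.ext
    intro y
    obtain ⟨y, rfl⟩ := Ideal.Quotient.mk_surjective y
    change x • (Ideal.Quotient.mk a y) = 0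
    rw [Algebra.smul_def, Ideal.Quotient.algebraMap_eq, ← map_mul, Ideal.Quotient.eq_zero_iff_mem]
    exact a.mul_mem_right _ hx
  have h2 : x • α = (Abelian.Ext.mk₀ (x • 𝟙 (ModuleCat.of R (R ⧸ a)))).comp α (zero_add i) := by
    rw [Abelian.Ext.mk₀_smul, Abelian.Ext.smul_comp, Abelian.Ext.mk₀_id_comp]
  rw [h2, h, Abelian.Ext.mk₀_zero, Abelian.Ext.zero_comp]

/-- Hom(R/a,N) = N[a]. -/
noncomputable def homTor (a : Ideal R) (N : Type u) [AddCommGroup N] [Module R N] :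
    ((R ⧸ a) →ₗ[R] N) ≃ₗ[R] tor R N a where
  toFun f := ⟨f 1, fun r hr => by
    rw [← map_smul, Algebra.smul_def, mul_one, Ideal.Quotient.algebraMap_eq,
      Ideal.Quotient.eq_zero_iff_mem.2 hr, map_zero]⟩
  map_add' f g := rfl
  map_smul' f g := rfl
  invFun y := Submodule.liftQ a (LinearMap.toSpanSingleton R N y.1) (fun r hr => y.2 r hr)
  left_inv f := by
    apply Submodule.linearMap_qext
    apply LinearMap.ext_ring
    change (1:R) • f 1 = f 1
    rw [one_smul]
  right_inv y := by
    apply Subtype.ext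
    change (1:R) • y.1 = y.1
    rw [one_smul]

theorem FE0_tor (a : Ideal R) (N : Type u) [AddCommGroup N] [Module R N] :
    FE R (R ⧸ a) N 0 ↔ Module.Finite R (tor R N a) := by
  rw [FE0_iff]
  exact Module.Finite.equiv_iff (homTor a N)

/-- inclusion on torsion -/
def torMap {R : Type*} [CommRing R] (a : Ideal R) {N N' : Type*} [AddCommGroup N] [Module R N] [AddCommGroup N'] [Module R N']
    (f : N →ₗ[R] N') : tor R N a →ₗ[R] tor R N' a :=
  LinearMap.codRestrict _ (f ∘ₗ Submodule.subtype _) (fun y r hr => by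
    change r • f y.1 = 0
    rw [← map_smul, y.2 r hr, map_zero])

theorem torMap_inj {R : Type*} [CommRing R] (a : Ideal R) {N N' : Type*} [AddCommGroup N] [Module R N] [AddCommGroup N'] [Module R N']
    (f : N →ₗ[R] N') (hf : Function.Injective f) : Function.Injective (torMap a f) := by
  intro y z h
  have h3 : ((torMap a f y : _) : N') = torMap a f z := by rw [h]
  exact Subtype.ext (hf h3)

/-- all Ext(R/a,N) f.g. -/
def CF (a : Ideal R) (N : Type u) [AddCommGroup N] [Module R N] : Prop := ∀ i, FE R (R ⧸ a) N i

variable [IsNoetherianRing R]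

theorem FE0_inj (a : Ideal R) {N N' : Type u} [AddCommGroup N] [Module R N] [AddCommGroup N'] [Module R N']
    (f : N →ₗ[R] N') (hf : Function.Injective f) (h : FE R (R ⧸ a) N' 0) : FE R (R ⧸ a) N 0 := by
  rw [FE0_tor] at *
  exact Module.Finite.of_injective _ (torMap_inj a f hf)

theorem CF_fin (a : Ideal R) (N : Type u) [AddCommGroup N] [Module R N] (h : Module.Finite R N) : CF a N :=
  fun i => by
    have : Module.Finite R (ModuleCat.of R N) := h
    have : Module.Finite R (ModuleCat.of R (R ⧸ a)) := inferInstanceAs (Module.Finite R (R ⧸ a))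
    exact ModuleCat.finite_ext R _ _ i

theorem finite_mid' {U V W Z : Type*} [AddCommGroup U] [AddCommGroup V] [AddCommGroup Z]
    [AddCommGroup W] [Module R U] [Module R V] [Module R W] [Module R Z] (f : U →ₗ[R] V) (g : V →ₗ[R] W)
    (k : Z →ₗ[R] W)
    (h : ∀ v, g v = 0 → ∃ u, f u = v) (hk : ∀ v, ∃ z, k z = g v) (hU : Module.Finite R U) (hZ : Module.Finite R Z) :
    Module.Finite R V := by
  refine finite_mid f (g.codRestrict (LinearMap.range k) (fun v => hk v)) (fun v hv => h v ?_) hU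
    inferInstance
  exact congrArg Subtype.val hv

section
variable {N : Type u} [AddCommGroup N] [Module R N] (x : R)

/-- kernel of x -/
abbrev kx (N : Type u) [AddCommGroup N] [Module R N] (x : R) := LinearMap.ker (mx R x : N →ₗ[R] N)
/-- range of x -/
abbrev rx (N : Type u) [AddCommGroup N] [Module R N] (x : R) := LinearMap.range (mx R x : N →ₗ[R] N)

omit [IsNoetherianRing R] in
theorem ex1 : Function.Exact (kx N x).subtype (mx R x : N →ₗ[R] N).rangeRestrict := by
  intro y
  rw [← LinearMap.mem_ker, LinearMap.ker_rangeRestrict]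
  simp

theorem D1 (a : Ideal R) (hx : x ∈ a) (h1 : CF a (kx N x)) (h2 : CF a (N ⧸ rx N x)) : CF a N := by
  intro i
  rcases i with _ | i
  · have h := h1 0
    rw [FE0_tor] at *
    refine Module.Finite.of_surjective (torMap a (kx N x).subtype) ?_
    rintro ⟨y, hy⟩
    exact ⟨⟨⟨y, hy x hx⟩, fun r hr => Subtype.ext (hy r hr)⟩, rfl⟩
  · let p : N →ₗ[R] rx N x := (mx R x : N →ₗ[R] N).rangeRestrict
    have hS1 := sc_exact (kx N x).subtype p (Submodule.injective_subtype _)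
      (LinearMap.surjective_rangeRestrict _) (ex1 x)
    have hS2 := sc_exact (rx N x).subtype (rx N x).mkQ (Submodule.injective_subtype _)
      (Submodule.mkQ_surjective _) (LinearMap.exact_subtype_mkQ _)
    let f1 := (Abelian.Ext.mk₀ (sc (kx N x).subtype p (ex1 x)).f).postcompOfLinear R
      (ModuleCat.of R (R ⧸ a)) (add_zero (i+1))
    let f2 := (Abelian.Ext.mk₀ (sc (kx N x).subtype p (ex1 x)).g).postcompOfLinear R
      (ModuleCat.of R (R ⧸ a)) (add_zero (i+1))
    let f3 := hS2.extClass.postcompOfLinear R (ModuleCat.of R (R ⧸ a)) (Eq.refl (i+1))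
    refine finite_mid' f1 f2 f3 (fun v hv => Abelian.Ext.covariant_sequence_exact₂ _ hS1 v hv) ?_ (h1 _) (h2 i)
    intro v
    refine Abelian.Ext.covariant_sequence_exact₁ (ModuleCat.of R (R ⧸ a)) hS2 (f2 v) ?_ rfl
    refine Eq.trans ?_ (zero_act a hx v)
    change (Abelian.Ext.comp v (Abelian.Ext.mk₀ (ModuleCat.ofHom p)) (add_zero (i+1))).comp
      (Abelian.Ext.mk₀ (ModuleCat.ofHom (rx N x).subtype)) (add_zero (i+1)) = _
    rw [Abelian.Ext.comp_assoc_of_second_deg_zero, Abelian.Ext.mk₀_comp_mk₀, Abelian.Ext.smul_eq_comp_mk₀]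
    rfl
end

theorem D2 (a : Ideal R) (c : Ideal R) : ∀ (A : Type u) [AddCommGroup A] [Module R A],
    (∀ r ∈ c, ∀ y : A, r • y = 0) → IsArtinian R A → IsNoetherian R (tor R A a) → CF a A := by
  induction c using WellFoundedGT.induction with
  | ind c ih =>
  intro A _ _ hc hA hT
  by_cases hac : a ≤ c
  · apply CF_fin
    have : tor R A a = ⊤ := by
      rw [eq_top_iff]; intro y _ r hr; exact hc r (hac hr) y
    rw [this] at hT
    exact Module.Finite.equiv (Submodule.topEquiv (R := R) (M := A))
  · obtain ⟨x, hxa, hxc, hfin⟩ := exists_elt R (A := A) a c hac hT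
    refine D1 x a hxa (ih (c ⊔ Ideal.span {x}) ?_ _ ?_ inferInstance ?_) (CF_fin _ _ inferInstance)
    · refine lt_of_le_of_ne le_sup_left fun h => hxc ?_
      rw [h]
      exact (le_sup_right : _ ≤ c ⊔ Ideal.span {x}) (Ideal.mem_span_singleton_self x)
    · intro r hr y
      obtain ⟨u, hu, v, hv, rfl⟩ := Submodule.mem_sup.1 hr
      obtain ⟨w, rfl⟩ := Ideal.mem_span_singleton'.1 hv
      apply Subtype.ext
      change (u + w * x) • y.1 = 0
      rw [add_smul, hc u hu, zero_add, mul_smul, show x • y.1 = 0 from y.2, smul_zero]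
    · exact isNoetherian_of_injective _ (torMap_inj a _ (Submodule.injective_subtype (kx A x)))

omit [IsNoetherianRing R] in
theorem art_of_primes {R : Type*} [CommRing R] [IsNoetherianRing R] (I : Ideal R)
    (hI : ∀ p : Ideal R, p.IsPrime → I ≤ p → p.IsMaximal) (N : Type*) [AddCommGroup N] [Module R N]
    (hN : Module.Finite R N) : (∀ r ∈ I, ∀ y : N, r • y = 0) → IsArtinian R N := by
  induction hN using IsNoetherianRing.induction_on_isQuotientEquivQuotientPrime R with
  | subsingleton N => intro _; infer_instance
  | quotient N p e =>
    intro h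
    have hp : I ≤ p.1 := by
      intro r hr
      have := h r hr (e.symm 1)
      rw [← map_smul, map_eq_zero_iff _ e.symm.injective] at this
      rw [← Ideal.Quotient.eq_zero_iff_mem]
      simpa [Algebra.smul_def] using this
    have hm := hI p.1 p.2 hp
    have : IsSimpleModule R (R ⧸ p.1) := isSimpleModule_iff_isCoatom.2 hm.out
    exact isArtinian_of_linearEquiv e.symm
  | exact N₁ N₂ N₃ f g hf hg hfg h1 h3 =>
    intro h
    have a1 := h1 (fun r hr x => hf (by rw [map_smul, h r hr, map_zero]))
    have a3 := h3 (fun r hr x => by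
      obtain ⟨x, rfl⟩ := hg x
      rw [← map_smul, h r hr, map_zero])
    exact isArtinian_of_range_eq_ker f g (LinearMap.exact_iff.1 hfg).symm

end D
end Cof


namespace Cof
section D3
variable {R : Type u} [CommRing R]

/-- a-torsion -/
def TorsA (a : Ideal R) (N : Type*) [AddCommGroup N] [Module R N] : Prop :=
  ∀ y : N, ∃ n : ℕ, ∀ r ∈ a ^ n, r • y = 0

/-- complement of the nonmaximal minimal primes. -/
def SS (a : Ideal R) : Submonoid R where
  carrier := {s | ∀ p ∈ a.minimalPrimes, ¬ p.IsMaximal → s ∉ p}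
  one_mem' p hp _ h := hp.1.1.ne_top ((Ideal.eq_top_iff_one _).2 h)
  mul_mem' {s t} hs ht p hp hm h := by
    rcases hp.1.1.mem_or_mem h with h | h
    · exact hs p hp hm h
    · exact ht p hp hm h

theorem prime_max_of_S (a : Ideal R) (hdim : ringKrullDim (R ⧸ a) = 1) (s : R) (hs : s ∈ SS a)
    (q : Ideal R) (hq : q.IsPrime) (haq : a ≤ q) (hsq : s ∈ q) : q.IsMaximal := by
  obtain ⟨p, hp, hpq⟩ := Ideal.exists_minimalPrimes_le haq
  by_cases hpm : p.IsMaximal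
  · rw [← hpm.eq_of_le hq.ne_top hpq]; exact hpm
  · have hne : p ≠ q := fun h => hs p hp hpm (h ▸ hsq)
    rw [ringKrullDim_quotient] at hdim
    have h1 := Order.krullDim_le_one_iff.1 hdim.le ⟨⟨q, hq⟩, haq⟩
    rcases h1 with h1 | h1
    · exfalso
      have : (⟨⟨q, hq⟩, haq⟩ : PrimeSpectrum.zeroLocus (a : Set R)) ≤ ⟨⟨p, hp.1.1⟩, hp.1.2⟩ :=
        h1 (show (⟨⟨p, hp.1.1⟩, hp.1.2⟩ : PrimeSpectrum.zeroLocus (a : Set R)) ≤ ⟨⟨q, hq⟩, haq⟩ from hpq)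
      exact hne (le_antisymm hpq this)
    · obtain ⟨m, hm, hqm⟩ := q.exists_le_maximal hq.ne_top
      have : (⟨⟨m, hm.isPrime⟩, haq.trans hqm⟩ : PrimeSpectrum.zeroLocus (a : Set R)) ≤ ⟨⟨q, hq⟩, haq⟩ :=
        h1 (show (⟨⟨q, hq⟩, haq⟩ : PrimeSpectrum.zeroLocus (a : Set R)) ≤ ⟨⟨m, hm.isPrime⟩, haq.trans hqm⟩ from hqm)
      rw [le_antisymm hqm this]; exact hm

variable [IsNoetherianRing R]

theorem prime_min_of_disj (a q : Ideal R) (hq : q.IsPrime) (haq : a ≤ q) (hd : Disjoint (SS a : Set R) q) :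
    q ∈ a.minimalPrimes := by
  classical
  have hfin : {p ∈ a.minimalPrimes | ¬ p.IsMaximal}.Finite :=
    (a.finite_minimalPrimes_of_isNoetherianRing).subset (Set.sep_subset _ _)
  have hsub : (q : Set R) ⊆ ⋃ i ∈ (hfin.toFinset : Set (Ideal R)), (i : Set R) := by
    intro r hr
    have : r ∉ SS a := fun h => Set.disjoint_left.1 hd h hr
    simp only [SS, Submonoid.mem_mk, Subsemigroup.mem_mk, Set.mem_ofPred_eq, not_forall, not_not] at this
    obtain ⟨p, h1, h2, h3⟩ := this
    simp only [Set.mem_iUnion]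
    exact ⟨p, by simpa using ⟨h1, h2⟩, h3⟩
  obtain ⟨p, hp, hqp⟩ := (Ideal.subset_union_prime (f := fun i : Ideal R => i) ⊥ ⊥ (by
    intro i hi _ _
    have : i ∈ a.minimalPrimes := (hfin.mem_toFinset.1 hi).1
    exact this.1.1)).1 hsub
  have hp : p ∈ a.minimalPrimes := (hfin.mem_toFinset.1 hp).1
  have : q = p := le_antisymm hqp (hp.2 ⟨hq, haq⟩ hqp)
  rw [this]; exact hp

theorem loc_max (a : Ideal R) (R' : Type*) [CommRing R'] [Algebra R R'] [IsLocalization (SS a) R']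
    (Q : Ideal R') (hQ : Q.IsPrime) (haQ : a.map (algebraMap R R') ≤ Q) : Q.IsMaximal := by
  have key : ∀ P : Ideal R', P.IsPrime → Q ≤ P → P.comap (algebraMap R R') ∈ a.minimalPrimes := by
    intro P hP h
    refine prime_min_of_disj a _ (hP.comap _) (Ideal.map_le_iff_le_comap.1 (haQ.trans h)) ?_
    exact ((IsLocalization.isPrime_iff_isPrime_disjoint (SS a) R' P).1 hP).2
  obtain ⟨m, hm, hQm⟩ := Q.exists_le_maximal hQ.ne_top
  have h1 := key Q hQ le_rfl
  have h2 := key m hm.isPrime hQm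
  have h3 : Q.comap (algebraMap R R') ≤ m.comap (algebraMap R R') := Ideal.comap_mono hQm
  have h4 := le_antisymm h3 (h2.2 h1.1 h3)
  have : Q = m := by
    rw [← IsLocalization.map_under (SS a) R' Q, ← IsLocalization.map_under (SS a) R' m]
    exact congrArg _ h4
  rw [this]; exact hm

theorem D3 (a : Ideal R) (hdim : ringKrullDim (R ⧸ a) = 1) (A : Type u) [AddCommGroup A] [Module R A]
    (ht : TorsA a A) (hS : ∀ y : A, ∃ s ∈ SS a, s • y = 0) (h0 : FE R (R ⧸ a) A 0) : CF a A := by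
  rw [FE0_tor] at h0
  have hk : ∃ s ∈ SS a, ∀ y ∈ tor R A a, s • y = 0 := by
    obtain ⟨t, htt⟩ := (Module.Finite.iff_fg (N := tor R A a)).1 h0
    choose f hf1 hf2 using hS
    refine ⟨∏ y ∈ t, f y, Submonoid.prod_mem _ fun y _ => hf1 y, fun y hy => ?_⟩
    rw [← htt] at hy
    refine Submodule.span_induction (p := fun y _ => (∏ y ∈ t, f y) • y = 0) ?_ ?_ ?_ ?_ hy
    · intro z hz
      obtain ⟨w, hw⟩ := Finset.dvd_prod_of_mem f hz
      rw [hw, mul_comm, mul_smul, hf2, smul_zero]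
    · exact smul_zero _
    · intro u v _ _ hu hv; rw [smul_add, hu, hv, add_zero]
    · intro r u _ hu; rw [smul_comm, hu, smul_zero]
  obtain ⟨s, hs, hsk⟩ := hk
  have hart : IsArtinian R (tor R A a) := by
    refine art_of_primes (a ⊔ Ideal.span {s}) ?_ _ h0 ?_
    · intro p hp hle
      exact prime_max_of_S a hdim s hs p hp (le_sup_left.trans hle)
        (hle ((le_sup_right : _ ≤ a ⊔ Ideal.span {s}) (Ideal.mem_span_singleton_self s)))
    · intro r hr y
      obtain ⟨u, hu, v, hv, rfl⟩ := Submodule.mem_sup.1 hr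
      obtain ⟨w, rfl⟩ := Ideal.mem_span_singleton'.1 hv
      apply Subtype.ext
      change (u + w * s) • y.1 = 0
      rw [add_smul, y.2 u hu, zero_add, mul_smul, hsk _ y.2, smul_zero]
  have hA : IsArtinian R A := art_of_tor R a (IsNoetherian.noetherian a) ht hart
  exact D2 a ⊥ A (by intro r hr y; rw [Ideal.mem_bot] at hr; rw [hr, zero_smul]) hA inferInstance

theorem loc_tor (a : Ideal R) (N : Type u) [AddCommGroup N] [Module R N] (h0 : Module.Finite R (tor R N a))
   (S : Submonoid R) :
    IsNoetherian (Localization S) (tor (Localization S) (LocalizedModule S N) a) := by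
  classical
  let R' := Localization S
  let f := LocalizedModule.mkLinearMap S N
  have hN : IsNoetherianRing R' := IsLocalization.isNoetherianRing S R' inferInstance
  obtain ⟨t, ht⟩ := (Module.Finite.iff_fg (N := tor R N a)).1 h0
  have hle : tor R' (LocalizedModule S N) a ≤ Submodule.span R' (f '' (t : Set N)) := by
    have h1 : (tor R N a).localized' R' S f ≤ Submodule.span R' (f '' (t : Set N)) := by
      rw [← ht, Submodule.localized'_span]
    refine le_trans ?_ h1
    intro y hy
    obtain ⟨⟨n, s⟩, rfl⟩ := IsLocalizedModule.mk'_surjective S f y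
    have hy' : ∀ r ∈ a, ∃ c : S, c • (r • n) = 0 := by
      intro r hr
      have h2 : r • IsLocalizedModule.mk' f n s = 0 := hy r hr
      rw [← IsLocalizedModule.mk'_smul, IsLocalizedModule.mk'_eq_zero'] at h2
      exact h2
    obtain ⟨g, hg⟩ := IsNoetherian.noetherian a
    have : ∀ r : R, ∃ c : S, r ∈ g → c • (r • n) = 0 := by
      intro r
      by_cases hr : r ∈ g
      · obtain ⟨c, hc⟩ := hy' r (hg ▸ Ideal.subset_span hr)
        exact ⟨c, fun _ => hc⟩
      · exact ⟨1, fun h => absurd h hr⟩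
    choose c hc using this
    let d : S := ∏ r ∈ g, c r
    have hd : d • n ∈ tor R N a := by
      intro r hr
      rw [← hg] at hr
      refine Submodule.span_induction (p := fun r _ => r • d • n = 0) ?_ ?_ ?_ ?_ hr
      · intro x hx
        obtain ⟨w, hw⟩ := Finset.dvd_prod_of_mem c hx
        rw [smul_comm, show d = w * c x by rw [mul_comm]; exact hw, mul_smul, hc x hx, smul_zero]
      · exact zero_smul _ _
      · intro a b _ _ ha hb; rw [add_smul, ha, hb, add_zero]
      · intro a b _ hb; rw [smul_assoc, hb, smul_zero]
    rw [Submodule.mem_localized']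
    exact ⟨d • n, hd, d * s, IsLocalizedModule.mk'_cancel_left _ _ _ _⟩
  have : IsNoetherian R' (Submodule.span R' (f '' (t : Set N))) :=
    isNoetherian_of_fg_of_noetherian _ ⟨t.image f, by rw [Finset.coe_image]⟩
  exact isNoetherian_of_le hle

end D3
end Cof


namespace Cof
section K
variable {R : Type u} [CommRing R] [IsNoetherianRing R]

omit [IsNoetherianRing R] in
theorem TorsA.of_inj {a : Ideal R} {N N' : Type*} [AddCommGroup N] [Module R N] [AddCommGroup N'] [Module R N']
    (h : TorsA a N') (f : N →ₗ[R] N') (hf : Function.Injective f) : TorsA a N := by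
  intro y
  obtain ⟨n, hn⟩ := h (f y)
  exact ⟨n, fun r hr => hf (by rw [map_smul, hn r hr, map_zero])⟩

omit [IsNoetherianRing R] in
theorem TorsA.of_surj {a : Ideal R} {N N' : Type*} [AddCommGroup N] [Module R N] [AddCommGroup N'] [Module R N']
    (h : TorsA a N) (f : N →ₗ[R] N') (hf : Function.Surjective f) : TorsA a N' := by
  intro y
  obtain ⟨y, rfl⟩ := hf y
  obtain ⟨n, hn⟩ := h y
  exact ⟨n, fun r hr => (by rw [← map_smul, hn r hr, map_zero])⟩

theorem loc_art (a : Ideal R) (N : Type u) [AddCommGroup N] [Module R N] (ht : TorsA a N)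
    (h0 : Module.Finite R (tor R N a)) :
    IsArtinian (Localization (SS a)) (LocalizedModule (SS a) N) := by
  let R' := Localization (SS a)
  have hN : IsNoetherianRing R' := IsLocalization.isNoetherianRing (SS a) R' inferInstance
  have h1 := loc_tor a N h0 (SS a)
  refine art_of_tor R' a (IsNoetherian.noetherian a) ?_ ?_
  · intro y
    obtain ⟨⟨n, s⟩, rfl⟩ := IsLocalizedModule.mk'_surjective (SS a) (LocalizedModule.mkLinearMap (SS a) N) y
    obtain ⟨k, hk⟩ := ht n
    refine ⟨k, fun r hr => ?_⟩
    change r • IsLocalizedModule.mk' (LocalizedModule.mkLinearMap (SS a) N) n s = 0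
    rw [← IsLocalizedModule.mk'_smul, hk r hr, IsLocalizedModule.mk'_zero]
  · refine art_of_primes (a.map (algebraMap R R')) (fun p hp hle => loc_max a R' p hp hle) _ inferInstance ?_
    intro r hr y
    refine Submodule.span_induction (p := fun r _ => r • y = 0) ?_ ?_ ?_ ?_ hr
    · rintro _ ⟨r, hr, rfl⟩
      apply Subtype.ext
      change (algebraMap R R' r) • y.1 = 0
      rw [algebraMap_smul]
      exact y.2 r hr
    · exact zero_smul _ _
    · intro a b _ _ ha hb; rw [add_smul, ha, hb, add_zero]
    · intro a b _ hb; rw [smul_assoc, hb, smul_zero]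

theorem exists_L (a : Ideal R) (N : Type u) [AddCommGroup N] [Module R N] (x : R) (S : Submonoid R)
    (h : IsNoetherian (Localization S) (LocalizedModule S N ⧸
      LinearMap.range (mx (Localization S) x : LocalizedModule S N →ₗ[Localization S] LocalizedModule S N))) :
    ∃ L : Submodule R N, L.FG ∧ ∀ n : N, ∃ s ∈ S, s • n ∈ L ⊔ rx N x := by
  classical
  let R' := Localization S
  let f := LocalizedModule.mkLinearMap S N
  let X := LinearMap.range (mx R' x : LocalizedModule S N →ₗ[R'] LocalizedModule S N)
  obtain ⟨g, hg⟩ := IsNoetherian.noetherian (⊤ : Submodule R' (LocalizedModule S N ⧸ X))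
  have : ∀ q : LocalizedModule S N ⧸ X, ∃ n : N, ∃ s : S, X.mkQ (IsLocalizedModule.mk' f n s) = q := by
    intro q
    obtain ⟨y, rfl⟩ := Submodule.mkQ_surjective _ q
    obtain ⟨⟨n, s⟩, rfl⟩ := IsLocalizedModule.mk'_surjective S f y
    exact ⟨n, s, rfl⟩
  choose nn ss hns using this
  let L : Submodule R N := Submodule.span R (nn '' (g : Set _))
  refine ⟨L, ⟨g.image nn, by rw [Finset.coe_image]⟩, fun n => ?_⟩
  have htop : (L.localized' R' S f).map X.mkQ = ⊤ := by
    rw [eq_top_iff, ← hg, Submodule.span_le]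
    intro q hq
    refine ⟨IsLocalizedModule.mk' f (nn q) (ss q), ?_, hns q⟩
    rw [SetLike.mem_coe, Submodule.mem_localized']
    exact ⟨nn q, Submodule.subset_span ⟨q, hq, rfl⟩, ss q, rfl⟩
  have hn : X.mkQ (f n) ∈ (L.localized' R' S f).map X.mkQ := htop ▸ Submodule.mem_top
  obtain ⟨y, hy, hyn⟩ := hn
  rw [SetLike.mem_coe, Submodule.mem_localized'] at hy
  obtain ⟨l, hl, s, rfl⟩ := hy
  have hX : f n - IsLocalizedModule.mk' f l s ∈ X := by
    rw [← Submodule.Quotient.mk_eq_zero, Submodule.Quotient.mk_sub]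
    exact sub_eq_zero.2 hyn.symm
  obtain ⟨z, hz⟩ := hX
  obtain ⟨⟨m, t⟩, rfl⟩ := IsLocalizedModule.mk'_surjective S f z
  have hz : x • IsLocalizedModule.mk' f m t = f n - IsLocalizedModule.mk' f l s := hz
  have e1 : (s : R) • IsLocalizedModule.mk' f l s = f l := IsLocalizedModule.mk'_cancel' f l s
  have e2 : (t : R) • IsLocalizedModule.mk' f m t = f m := IsLocalizedModule.mk'_cancel' f m t
  have hz2 : f (((s : R) * t) • n - (t : R) • l - (x * s) • m) = 0 := by
    rw [map_sub, map_sub, map_smul, map_smul, map_smul, ← e1, ← e2]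
    have : ((s : R) * t) • x • IsLocalizedModule.mk' f m t = ((s : R) * t) • (f n - IsLocalizedModule.mk' f l s) := by rw [hz]
    rw [smul_sub] at this
    rw [smul_smul (t : R), mul_comm (t : R), ← this]
    simp only [smul_smul]
    rw [sub_eq_zero]
    congr 1; ring
  obtain ⟨c, hc⟩ := (IsLocalizedModule.eq_zero_iff S f).1 hz2
  refine ⟨c * (s * t), S.mul_mem c.2 (S.mul_mem s.2 t.2), ?_⟩
  have hc : (c : R) • (((s : R) * t) • n - (t : R) • l - (x * s) • m) = 0 := hc
  have : ((c : R) * (s * t)) • n = ((c : R) * t) • l + x • (((c : R) * s) • m) := by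
    rw [smul_sub, smul_sub, smul_smul, smul_smul, smul_smul, sub_sub, sub_eq_zero] at hc
    rw [hc, smul_smul]
    congr 2; ring
  rw [this]
  exact Submodule.add_mem_sup (L.smul_mem _ hl) ⟨_, rfl⟩

theorem keyK (a : Ideal R) (hdim : ringKrullDim (R ⧸ a) = 1) (c : Ideal R) :
    ∀ (N : Type u) [AddCommGroup N] [Module R N], (∀ r ∈ c, ∀ y : N, r • y = 0) → TorsA a N →
      FE R (R ⧸ a) N 0 → FE R (R ⧸ a) N 1 → CF a N := by
  induction c using WellFoundedGT.induction with
  | ind c ih =>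
  intro N _ _ hc ht h0 h1
  have h0' := (FE0_tor a N).1 h0
  by_cases hac : a ≤ c
  · apply CF_fin
    have : tor R N a = ⊤ := by
      rw [eq_top_iff]; intro y _ r hr; exact hc r (hac hr) y
    rw [this] at h0'
    exact Module.Finite.equiv (Submodule.topEquiv (R := R) (M := N))
  have hart := loc_art a N ht h0'
  obtain ⟨x, hxa, hxc, hfin⟩ := exists_elt (Localization (SS a)) (A := LocalizedModule (SS a) N) a c hac
    (loc_tor a N h0' (SS a))
  let p : N →ₗ[R] rx N x := (mx R x : N →ₗ[R] N).rangeRestrict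
  have hp : Function.Surjective p := LinearMap.surjective_rangeRestrict _
  have hi : Function.Injective (kx N x).subtype := Submodule.injective_subtype _
  have hi2 : Function.Injective (rx N x).subtype := Submodule.injective_subtype _
  have hq : Function.Surjective (rx N x).mkQ := Submodule.mkQ_surjective _
  have hex2 := LinearMap.exact_subtype_mkQ (rx N x)
  have hr0 : FE R (R ⧸ a) (rx N x) 0 := FE0_inj a (rx N x).subtype hi2 h0
  have hk0 : FE R (R ⧸ a) (kx N x) 0 := FE0_inj a (kx N x).subtype hi h0
  have hk1 : FE R (R ⧸ a) (kx N x) 1 := cov_left _ p hi hp (ex1 x) 0 hr0 h1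
  have hk : CF a (kx N x) := by
    refine ih (c ⊔ Ideal.span {x}) ?_ _ ?_ (ht.of_inj _ hi) hk0 hk1
    · refine lt_of_le_of_ne le_sup_left fun h => hxc ?_
      rw [h]
      exact (le_sup_right : _ ≤ c ⊔ Ideal.span {x}) (Ideal.mem_span_singleton_self x)
    · intro r hr y
      obtain ⟨u, hu, v, hv, rfl⟩ := Submodule.mem_sup.1 hr
      obtain ⟨w, rfl⟩ := Ideal.mem_span_singleton'.1 hv
      apply Subtype.ext
      change (u + w * x) • y.1 = 0
      rw [add_smul, hc u hu, zero_add, mul_smul, show x • y.1 = 0 from y.2, smul_zero]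
  have hr1 : FE R (R ⧸ a) (rx N x) 1 := cov_right _ p hi hp (ex1 x) 1 h1 (hk 2)
  have hb0 : FE R (R ⧸ a) (N ⧸ rx N x) 0 := cov_right _ _ hi2 hq hex2 0 h0 hr1
  refine D1 x a hxa hk ?_
  obtain ⟨L, hL, hLs⟩ := exists_L a N x (SS a) hfin
  let L' : Submodule R (N ⧸ rx N x) := L.map (rx N x).mkQ
  have hL' : Module.Finite R L' := Module.Finite.iff_fg.2 (hL.map _)
  have hLc : CF a L' := CF_fin a _ hL'
  have hexL := LinearMap.exact_subtype_mkQ L'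
  have hA : CF a ((N ⧸ rx N x) ⧸ L') := by
    refine D3 a hdim _ ((ht.of_surj _ hq).of_surj _ L'.mkQ_surjective) ?_
      (cov_right L'.subtype L'.mkQ (Submodule.injective_subtype _) L'.mkQ_surjective hexL 0 hb0 (hLc 1))
    intro y
    obtain ⟨y, rfl⟩ := L'.mkQ_surjective y
    obtain ⟨y, rfl⟩ := hq y
    obtain ⟨s, hs, hsy⟩ := hLs y
    refine ⟨s, hs, ?_⟩
    rw [← map_smul, ← map_smul, Submodule.mkQ_apply, Submodule.Quotient.mk_eq_zero]
    obtain ⟨l, hl, z, hz, hlz⟩ := Submodule.mem_sup.1 hsy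
    refine ⟨l, hl, ?_⟩
    rw [← hlz, map_add, left_eq_add]
    simpa using hz
  exact fun i => cov_mid L'.subtype L'.mkQ (Submodule.injective_subtype _) L'.mkQ_surjective hexL i (hLc i) (hA i)

end K
end Cof


namespace Cof
section E1
variable {R : Type u} [CommRing R]

/-- torsion submodule -/
def gam (a : Ideal R) (N : Type*) [AddCommGroup N] [Module R N] : Submodule R N where
  carrier := {x | ∃ n : ℕ, ∀ r ∈ a ^ n, r • x = 0}
  add_mem' := by
    rintro x y ⟨n, hn⟩ ⟨m, hm⟩
    refine ⟨n + m, fun r hr => ?_⟩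
    rw [smul_add, hn r (Ideal.pow_le_pow_right (by omega) hr), hm r (Ideal.pow_le_pow_right (by omega) hr), add_zero]
  zero_mem' := ⟨0, fun r _ => smul_zero r⟩
  smul_mem' c x := by
    rintro ⟨n, hn⟩
    exact ⟨n, fun r hr => by rw [smul_comm, hn r hr, smul_zero]⟩

theorem gam_tors (a : Ideal R) (N : Type*) [AddCommGroup N] [Module R N] : TorsA a (gam a N) := by
  rintro ⟨y, n, hn⟩
  exact ⟨n, fun r hr => Subtype.ext (hn r hr)⟩

variable [IsNoetherianRing R]

theorem fg_kill (a : Ideal R) {N : Type*} [AddCommGroup N] [Module R N] (P : Submodule R N) (hP : P.FG)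
    (h : P ≤ gam a N) : ∃ n : ℕ, ∀ r ∈ a ^ n, ∀ y ∈ P, r • y = 0 := by
  classical
  obtain ⟨t, rfl⟩ := hP
  have : ∀ y : N, ∃ n : ℕ, y ∈ t → ∀ r ∈ a ^ n, r • y = 0 := by
    intro y
    by_cases hy : y ∈ t
    · obtain ⟨n, hn⟩ := h (Submodule.subset_span hy)
      exact ⟨n, fun _ => hn⟩
    · exact ⟨0, fun h => absurd h hy⟩
  choose n hn using this
  refine ⟨t.sup n, fun r hr y hy => ?_⟩
  refine Submodule.span_induction (p := fun y _ => r • y = 0) ?_ ?_ ?_ ?_ hy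
  · intro z hz
    exact hn z hz r (Ideal.pow_le_pow_right (Finset.le_sup hz) hr)
  · exact smul_zero _
  · intro u v _ _ hu hv; rw [smul_add, hu, hv, add_zero]
  · intro c u _ hu; rw [smul_comm, hu, smul_zero]

theorem tor_quot_gam (a : Ideal R) (N : Type*) [AddCommGroup N] [Module R N] (t : ℕ) (y : N ⧸ gam a N)
    (hy : ∀ r ∈ a ^ t, r • y = 0) : y = 0 := by
  obtain ⟨y, rfl⟩ := (gam a N).mkQ_surjective y
  let P : Submodule R N := Submodule.map (LinearMap.toSpanSingleton R N y) (a ^ t)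
  obtain ⟨n, hn⟩ := fg_kill a P ((IsNoetherian.noetherian (a ^ t)).map _) (by
    rintro _ ⟨r, hr, rfl⟩
    have := hy r hr
    rw [← map_smul, Submodule.mkQ_apply, Submodule.Quotient.mk_eq_zero] at this
    exact this)
  rw [Submodule.mkQ_apply, Submodule.Quotient.mk_eq_zero]
  refine ⟨n + t, fun r hr => ?_⟩
  rw [pow_add] at hr
  refine Submodule.mul_induction_on hr ?_ ?_
  · intro u hu v hv
    rw [mul_smul]
    exact hn u hu _ ⟨v, hv, rfl⟩
  · intro u v hu hv; rw [add_smul, hu, hv, add_zero]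

theorem gam_injective (a : Ideal R) (E : Type u) [AddCommGroup E] [Module R E] [hE : Module.Injective R E] :
    Module.Injective R (gam a E) := by
  apply Module.Baer.injective
  intro I g
  obtain ⟨n, hn⟩ := fg_kill a (LinearMap.range ((gam a E).subtype ∘ₗ g)) (by rw [LinearMap.range_eq_map]; exact (IsNoetherian.noetherian (⊤ : Submodule R I)).map _) (by
    rintro _ ⟨y, rfl⟩
    exact (g y).2)
  obtain ⟨k, hk⟩ := Ideal.exists_pow_inf_eq_pow_smul a (I : Submodule R R)
  have hAR : a ^ (n + k) ⊓ I ≤ a ^ n • I := by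
    have := hk (n + k) (by omega)
    rw [Nat.add_sub_cancel] at this
    simp only [smul_eq_mul, Ideal.mul_top] at this
    rw [this]
    exact Submodule.smul_mono le_rfl inf_le_right
  have hg0 : ∀ y : I, (y : R) ∈ a ^ (n + k) → g y = 0 := by
    intro y hy
    have h1 : (y : R) ∈ a ^ n • I := hAR ⟨hy, y.2⟩
    have h2 : ∀ z ∈ a ^ n • I, ∃ hz : z ∈ I, g ⟨z, hz⟩ = 0 := by
      intro z hz
      refine Submodule.smul_induction_on hz ?_ ?_
      · intro r hr w hw
        refine ⟨I.mul_mem_left _ hw, ?_⟩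
        have : g (r • ⟨w, hw⟩) = 0 := by
          rw [map_smul]
          exact Subtype.ext (hn r hr _ ⟨⟨w, hw⟩, rfl⟩)
        exact this
      · rintro u v ⟨hu, hu'⟩ ⟨hv, hv'⟩
        refine ⟨add_mem hu hv, ?_⟩
        have : g (⟨u, hu⟩ + ⟨v, hv⟩) = 0 := by rw [map_add, hu', hv', add_zero]
        exact this
    exact (h2 _ h1).2
  let j : I →ₗ[R] (R ⧸ a ^ (n + k)) := (Submodule.mkQ _) ∘ₗ Submodule.subtype _
  have hker : LinearMap.ker j ≤ LinearMap.ker ((gam a E).subtype ∘ₗ g) := by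
    intro y hy
    have : (y : R) ∈ a ^ (n+k) := by
      have h : Submodule.Quotient.mk (p := a ^ (n+k)) (y : R) = 0 := hy
      rwa [Submodule.Quotient.mk_eq_zero] at h
    change ((g y : gam a E) : E) = 0
    rw [hg0 y this]; rfl
  obtain ⟨h, hh⟩ := hE.out ((LinearMap.ker j).liftQ j le_rfl)
    (LinearMap.ker_eq_bot.1 (Submodule.ker_liftQ_eq_bot _ _ _ le_rfl))
    ((LinearMap.ker j).liftQ ((gam a E).subtype ∘ₗ g) hker)
  have he : h (Submodule.Quotient.mk 1) ∈ gam a E := by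
    refine ⟨n + k, fun r hr => ?_⟩
    rw [← map_smul, ← Submodule.Quotient.mk_smul, smul_eq_mul, mul_one, (Submodule.Quotient.mk_eq_zero _).2 hr, map_zero]
  refine ⟨LinearMap.toSpanSingleton R _ ⟨_, he⟩, ?_⟩
  intro x hx
  apply Subtype.ext
  have h1 := hh (Submodule.Quotient.mk ⟨x, hx⟩)
  have h2 : h (Submodule.Quotient.mk x) = g ⟨x, hx⟩ := h1
  rw [← h2]
  change x • h (Submodule.Quotient.mk 1) = _
  rw [← map_smul, ← Submodule.Quotient.mk_smul, smul_eq_mul, mul_one]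

theorem quot_gam_injective (a : Ideal R) (E : Type u) [AddCommGroup E] [Module R E] [hE : Module.Injective R E] :
    Module.Injective R (E ⧸ gam a E) := by
  have hG := gam_injective a E
  obtain ⟨r, hr⟩ := hG.out (gam a E).subtype (Submodule.injective_subtype _) LinearMap.id
  let σ : (E ⧸ gam a E) →ₗ[R] E := (gam a E).liftQ (LinearMap.id - (gam a E).subtype ∘ₗ r) (by
    intro y hy
    have := hr ⟨y, hy⟩
    have h2 : r y = ⟨y, hy⟩ := this
    change y - (r y : E) = 0
    rw [h2, sub_self])
  have hσ : ∀ y, (gam a E).mkQ (σ y) = y := by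
    intro y
    obtain ⟨y, rfl⟩ := (gam a E).mkQ_surjective y
    change (gam a E).mkQ (y - (r y : E)) = _
    rw [map_sub, sub_eq_self]
    simp
  refine ⟨fun X Y _ _ _ _ f hf g => ?_⟩
  obtain ⟨h, hh⟩ := hE.out f hf (σ ∘ₗ g)
  refine ⟨(gam a E).mkQ ∘ₗ h, fun x => ?_⟩
  rw [LinearMap.comp_apply, hh]
  exact hσ _

omit [IsNoetherianRing R] in
theorem exists_inj (N : Type u) [AddCommGroup N] [Module R N] : ∃ (E : Type u) (_ : AddCommGroup E) (_ : Module R E)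
    (_ : Module.Injective R E) (j : N →ₗ[R] E), Function.Injective j := by
  let E := Injective.under (ModuleCat.of R N)
  have : Module.Injective R E := (Module.injective_iff_injective_object R E).2 (inferInstanceAs (Injective E))
  exact ⟨E, inferInstance, inferInstance, this, (Injective.ι (ModuleCat.of R N)).hom,
    (ModuleCat.mono_iff_injective _).1 inferInstance⟩

omit [IsNoetherianRing R] in
theorem ext_inj_zero {X : ModuleCat.{u} R} (J : Type u) [AddCommGroup J] [Module R J] [Module.Injective R J] (i : ℕ)
    (α : Abelian.Ext X (ModuleCat.of R J) (i+1)) : α = 0 := by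
  have : Injective (ModuleCat.of R J) := (Module.injective_iff_injective_object R J).1 inferInstance
  exact α.eq_zero_of_injective

end E1
end Cof


namespace Cof
section E2
variable {R : Type u} [CommRing R]
open Abelian

/-- R/a^t -/
abbrev Qm (a : Ideal R) (t : ℕ) : ModuleCat.{u} R := ModuleCat.of R (R ⧸ a ^ t)

/-- transition maps -/
def pim (a : Ideal R) {t v : ℕ} (h : t ≤ v) : Qm a v ⟶ Qm a t :=
  ModuleCat.ofHom (Submodule.mapQ _ _ LinearMap.id (Ideal.pow_le_pow_right h))

theorem pim_trans (a : Ideal R) {t v w : ℕ} (h : t ≤ v) (h' : v ≤ w) :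
    pim a h' ≫ pim a h = pim a (h.trans h') := by
  apply ModuleCat.hom_ext
  apply Submodule.linearMap_qext
  rfl

/-- pullback along transition maps -/
noncomputable def pb (a : Ideal R) {t v : ℕ} (h : t ≤ v) {Y : ModuleCat.{u} R} {n : ℕ} (α : Ext (Qm a t) Y n) :
    Ext (Qm a v) Y n := (Ext.mk₀ (pim a h)).comp α (zero_add n)

theorem pb_trans (a : Ideal R) {t v w : ℕ} (h : t ≤ v) (h' : v ≤ w) {Y : ModuleCat.{u} R} {n : ℕ} (α : Ext (Qm a t) Y n) :
    pb a h' (pb a h α) = pb a (h.trans h') α := by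
  simp only [pb, Ext.mk₀_comp_mk₀_assoc, pim_trans]

theorem pb_comp (a : Ideal R) {t v : ℕ} (h : t ≤ v) {Y Z : ModuleCat.{u} R} {n m k : ℕ} (α : Ext (Qm a t) Y n)
    (β : Ext Y Z m) (e : n + m = k) : pb a h (α.comp β e) = (pb a h α).comp β e := by
  simp only [pb]
  rw [Ext.comp_assoc _ _ _ (zero_add n) e (by omega)]

theorem pb_zero (a : Ideal R) {t v : ℕ} (h : t ≤ v) (Y : ModuleCat.{u} R) (n : ℕ) :
    pb a h (0 : Ext (Qm a t) Y n) = 0 := by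
  simp [pb]

theorem pb_sub (a : Ideal R) {t v : ℕ} (h : t ≤ v) {Y : ModuleCat.{u} R} {n : ℕ} (α β : Ext (Qm a t) Y n) :
    pb a h (α - β) = pb a h α - pb a h β := by
  simp [pb, sub_eq_add_neg, Ext.comp_add, Ext.comp_neg]

theorem V [IsNoetherianRing R] (a : Ideal R) (i : ℕ) : ∀ (T : Type u) [AddCommGroup T] [Module R T], TorsA a T → ∀ (t : ℕ)
    (α : Ext (Qm a t) (ModuleCat.of R T) (i+1)), ∃ (v : ℕ) (h : t ≤ v), pb a h α = 0 := by
  induction i with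
  | zero =>
    intro T _ _ hT t α
    obtain ⟨E, _, _, _, j, hj⟩ := exists_inj (R := R) T
    have hE := gam_injective a E
    let f : T →ₗ[R] gam a E := j.codRestrict (gam a E) (fun y => by
      obtain ⟨n, hn⟩ := hT y
      exact ⟨n, fun r hr => by rw [← map_smul, hn r hr, map_zero]⟩)
    have hf : Function.Injective f := fun x y hxy => hj (congrArg Subtype.val hxy)
    let g := (LinearMap.range f).mkQ
    have hfg : Function.Exact f g := LinearMap.exact_map_mkQ_range f
    have hS := sc_exact f g hf (Submodule.mkQ_surjective _) hfg
    obtain ⟨β, hβ⟩ := Ext.covariant_sequence_exact₁ (X := Qm a t) hS (n₀ := 0) α (ext_inj_zero (gam a E) _ _) rfl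
    obtain ⟨b, rfl⟩ := Ext.mk₀_bijective _ _ |>.2 β
    obtain ⟨c, hc⟩ := Submodule.mkQ_surjective (LinearMap.range f) (b.hom (Submodule.Quotient.mk 1))
    obtain ⟨n, hn⟩ := gam_tors a E c
    let v := max t n
    have htv : t ≤ v := le_max_left _ _
    refine ⟨v, htv, ?_⟩
    let l : Qm a v ⟶ (sc f g hfg).X₂ := ModuleCat.ofHom (Submodule.liftQ (a ^ v) (LinearMap.toSpanSingleton R (gam a E) c)
      (fun r hr => hn r (Ideal.pow_le_pow_right (le_max_right _ _) hr)))
    have hl : pim a htv ≫ b = l ≫ (sc f g hfg).g := by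
      apply ModuleCat.hom_ext
      apply Submodule.linearMap_qext
      apply LinearMap.ext_ring
      change b.hom (Submodule.Quotient.mk 1) = g ((1:R) • c)
      rw [one_smul]; exact hc.symm
    refine (congrArg (pb a htv) hβ.symm).trans ((pb_comp a htv (Ext.mk₀ b) hS.extClass rfl).trans ?_)
    unfold pb
    rw [Ext.mk₀_comp_mk₀, hl, ← Ext.mk₀_comp_mk₀, Ext.comp_assoc _ _ _ (zero_add 0) (zero_add 1) (by omega),
      hS.comp_extClass, Ext.comp_zero]
    rfl
  | succ i ih =>
    intro T _ _ hT t α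
    obtain ⟨E, _, _, _, j, hj⟩ := exists_inj (R := R) T
    have hE := gam_injective a E
    let f : T →ₗ[R] gam a E := j.codRestrict (gam a E) (fun y => by
      obtain ⟨n, hn⟩ := hT y
      exact ⟨n, fun r hr => by rw [← map_smul, hn r hr, map_zero]⟩)
    have hf : Function.Injective f := fun x y hxy => hj (congrArg Subtype.val hxy)
    let g := (LinearMap.range f).mkQ
    have hfg : Function.Exact f g := LinearMap.exact_map_mkQ_range f
    have hS := sc_exact f g hf (Submodule.mkQ_surjective _) hfg
    obtain ⟨β, hβ⟩ := Ext.covariant_sequence_exact₁ (X := Qm a t) hS (n₀ := i+1) α (ext_inj_zero (gam a E) _ _) rfl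
    obtain ⟨v, h, hv⟩ := ih _ ((gam_tors a E).of_surj g (Submodule.mkQ_surjective _)) t β
    refine ⟨v, h, ?_⟩
    refine (congrArg (pb a h) hβ.symm).trans ((pb_comp a h β hS.extClass rfl).trans ?_)
    refine (congrArg (fun z => Ext.comp z hS.extClass rfl) hv).trans ?_
    exact Ext.zero_comp ..

/-- `H` is a model of `colim_t Ext^i(R/a^t, M)`. -/
structure LC (a : Ideal R) (i : ℕ) (M H : Type u) [AddCommGroup M] [Module R M] [AddCommGroup H] [Module R H] where
  φ : ∀ t, Ext (Qm a t) (ModuleCat.of R M) i →ₗ[R] H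
  comp : ∀ {t v} (h : t ≤ v) α, φ v (pb a h α) = φ t α
  surj : ∀ y, ∃ t α, φ t α = y
  ker : ∀ t α, φ t α = 0 → ∃ (v : ℕ) (h : t ≤ v), pb a h α = 0

theorem LC.tors {a : Ideal R} {i : ℕ} {M H : Type u} [AddCommGroup M] [Module R M] [AddCommGroup H] [Module R H]
    (L : LC a i M H) : TorsA a H := by
  intro y
  obtain ⟨t, α, rfl⟩ := L.surj y
  exact ⟨t, fun r hr => by rw [← map_smul, zero_act _ hr, map_zero]⟩

theorem ext0_pb (a : Ideal R) {t v : ℕ} (h : t ≤ v) {M : Type u} [AddCommGroup M] [Module R M]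
    (α : Ext (Qm a t) (ModuleCat.of R M) 0) :
    ext0 (R ⧸ a ^ v) M (pb a h α) (Submodule.Quotient.mk 1) = ext0 (R ⧸ a ^ t) M α (Submodule.Quotient.mk 1) := by
  obtain ⟨b, rfl⟩ := Ext.mk₀_bijective _ _ |>.2 α
  have key : ∀ (X : Type u) [AddCommGroup X] [Module R X] (b : ModuleCat.of R X ⟶ ModuleCat.of R M),
      ext0 X M (Ext.mk₀ b) = b.hom := by
    intro X _ _ b
    have : (Ext.linearEquiv₀ (R := R)) (Ext.mk₀ b) = b := by
      apply (Ext.mk₀_bijective _ _).1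
      rw [Ext.mk₀_linearEquiv₀_apply]
    change ModuleCat.homLinearEquiv (S := R) (Ext.linearEquiv₀ (R := R) (Ext.mk₀ b)) = _
    rw [this]; rfl
  unfold pb
  rw [Ext.mk₀_comp_mk₀, key, key]
  rfl

theorem ext0_zero_iff (I : Ideal R) {M : Type u} [AddCommGroup M] [Module R M]
    (α : Ext (ModuleCat.of R (R ⧸ I)) (ModuleCat.of R M) 0)
    (h : ext0 (R ⧸ I) M α (Submodule.Quotient.mk 1) = 0) : α = 0 := by
  apply (ext0 (R ⧸ I) M).injective
  rw [map_zero]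
  apply Submodule.linearMap_qext
  apply LinearMap.ext_ring
  exact h

theorem LC0 (a : Ideal R) (M : Type u) [AddCommGroup M] [Module R M] : Nonempty (LC a 0 M (gam a M)) := by
  let φ : ∀ t, Ext (Qm a t) (ModuleCat.of R M) 0 →ₗ[R] gam a M := fun t =>
    LinearMap.codRestrict (gam a M) ((LinearMap.applyₗ (Submodule.Quotient.mk 1)).comp (ext0 (R ⧸ a ^ t) M).toLinearMap)
      (fun α => ⟨t, fun r hr => by
        rw [← map_smul, zero_act _ hr, map_zero]⟩)
  refine ⟨⟨φ, ?_, ?_, ?_⟩⟩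
  · intro t v h α
    exact Subtype.ext (ext0_pb a h α)
  · rintro ⟨y, t, hy⟩
    refine ⟨t, (ext0 _ _).symm (Submodule.liftQ (a ^ t) (LinearMap.toSpanSingleton R M y) (fun r hr => hy r hr)), ?_⟩
    apply Subtype.ext
    change (ext0 _ _ ((ext0 _ _).symm _)) (Submodule.Quotient.mk 1) = y
    rw [LinearEquiv.apply_symm_apply]
    change (1:R) • y = y
    rw [one_smul]
  · intro t α h
    refine ⟨t, le_rfl, ?_⟩
    rw [ext0_zero_iff (a ^ t) α (congrArg Subtype.val h), pb_zero]

theorem quot_ext0 [IsNoetherianRing R] (a : Ideal R) (N : Type u) [AddCommGroup N] [Module R N] (t : ℕ)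
    (α : Ext (Qm a t) (ModuleCat.of R (N ⧸ gam a N)) 0) : α = 0 := by
  apply ext0_zero_iff
  apply tor_quot_gam a N t
  intro r hr
  rw [← LinearMap.smul_apply, ← map_smul, zero_act _ hr, map_zero, LinearMap.zero_apply]

end E2
end Cof


namespace Cof
section E3
variable {R : Type u} [CommRing R] [IsNoetherianRing R]
open Abelian

theorem pb_comp_zero (a : Ideal R) {t v : ℕ} (h : t ≤ v) {Y Z : ModuleCat.{u} R} {n m k : ℕ} (α : Ext (Qm a t) Y n)
    (β : Ext Y Z m) (e : n + m = k) (h0 : pb a h α = 0) : pb a h (α.comp β e) = 0 := by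
  rw [pb_comp, h0, Ext.zero_comp]

/-- passing from C to M1 along `0 → M1 → E → C → 0` with E acyclic. -/
theorem LC_shift (a : Ideal R) (i : ℕ) {M E C H : Type u} [AddCommGroup M] [Module R M] [AddCommGroup E] [Module R E]
    [AddCommGroup C] [Module R C] [AddCommGroup H] [Module R H] (f : M →ₗ[R] E) (g : E →ₗ[R] C)
    (hf : Function.Injective f) (hg : Function.Surjective g) (hfg : Function.Exact f g)
    (hE : ∀ t j (α : Ext (Qm a t) (ModuleCat.of R E) j), α = 0) (L : LC a i C H) : Nonempty (LC a (i+1) M H) := by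
  have hS := sc_exact f g hf hg hfg
  let d : ∀ t, Ext (Qm a t) (ModuleCat.of R C) i →ₗ[R] Ext (Qm a t) (ModuleCat.of R M) (i+1) := fun t =>
    hS.extClass.postcompOfLinear R (Qm a t) rfl
  have hd : ∀ {t v} (h : t ≤ v) α, d v (pb a h α) = pb a h (d t α) := fun h α =>
    (pb_comp a h (Y := (sc f g hfg).X₃) α hS.extClass rfl).symm
  have hbij : ∀ t, Function.Bijective (d t) := by
    intro t
    constructor
    · rw [injective_iff_map_eq_zero]
      intro α hα
      obtain ⟨β, hβ⟩ := Ext.covariant_sequence_exact₃ (X := Qm a t) hS (n₀ := i) α rfl hα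
      rw [← hβ, hE t i β]
      exact Ext.zero_comp ..
    · intro α
      obtain ⟨β, hβ⟩ := Ext.covariant_sequence_exact₁ (X := Qm a t) hS (n₀ := i) α (hE _ _ _) rfl
      exact ⟨β, hβ⟩
  let e := fun t => LinearEquiv.ofBijective (d t) (hbij t)
  have he : ∀ {t v} (h : t ≤ v) α, (e v).symm (pb a h α) = pb a h ((e t).symm α) := by
    intro t v h α
    rw [LinearEquiv.symm_apply_eq]
    refine Eq.trans ?_ (hd h _).symm
    congr 1
    exact ((e t).apply_symm_apply α).symm
  refine ⟨⟨fun t => (L.φ t).comp (e t).symm.toLinearMap, ?_, ?_, ?_⟩⟩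
  · intro t v h α
    change L.φ v ((e v).symm _) = L.φ t ((e t).symm _)
    rw [he, L.comp]
  · intro y
    obtain ⟨t, α, rfl⟩ := L.surj y
    exact ⟨t, e t α, congrArg (L.φ t) ((e t).symm_apply_apply α)⟩
  · intro t α h
    obtain ⟨v, h, hv⟩ := L.ker t _ h
    refine ⟨v, h, ?_⟩
    apply (e v).symm.injective
    rw [he, map_zero]
    exact hv

/-- passing from M/T to M in positive degree for T torsion. -/
theorem LC_tors (a : Ideal R) (i : ℕ) {T M M1 H : Type u} [AddCommGroup M] [Module R M] [AddCommGroup T] [Module R T]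
    [AddCommGroup M1] [Module R M1] [AddCommGroup H] [Module R H] (f : T →ₗ[R] M) (g : M →ₗ[R] M1)
    (hf : Function.Injective f) (hg : Function.Surjective g) (hfg : Function.Exact f g)
    (hT : TorsA a T) (L : LC a (i+1) M1 H) : Nonempty (LC a (i+1) M H) := by
  have hS := sc_exact f g hf hg hfg
  let d : ∀ t, Ext (Qm a t) (ModuleCat.of R M) (i+1) →ₗ[R] Ext (Qm a t) (ModuleCat.of R M1) (i+1) := fun t =>
    (Ext.mk₀ (sc f g hfg).g).postcompOfLinear R (Qm a t) (add_zero _)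
  have hd : ∀ {t v} (h : t ≤ v) α, d v (pb a h α) = pb a h (d t α) := fun h α =>
    (pb_comp a h (Y := (sc f g hfg).X₂) α (Ext.mk₀ (sc f g hfg).g) (add_zero _)).symm
  refine ⟨⟨fun t => (L.φ t).comp (d t), ?_, ?_, ?_⟩⟩
  · intro t v h α
    change L.φ v (d v _) = L.φ t (d t _)
    rw [hd, L.comp]
  · intro y
    obtain ⟨t, α, rfl⟩ := L.surj y
    obtain ⟨v, h, hv⟩ := V a (i+1) T hT t (Ext.comp (Y := (sc f g hfg).X₃) (Z := (sc f g hfg).X₁) α hS.extClass rfl)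
    have hv' : Ext.comp (Y := (sc f g hfg).X₃) (pb a h α) hS.extClass rfl = 0 := (pb_comp a h (Y := (sc f g hfg).X₃) α hS.extClass rfl).symm.trans hv
    obtain ⟨β, hβ⟩ := Ext.covariant_sequence_exact₃ (X := Qm a v) hS (n₀ := i+1) (pb a h α) rfl hv'
    refine ⟨v, β, ?_⟩
    rw [← L.comp h α]
    exact congrArg (L.φ v) hβ
  · intro t α h
    obtain ⟨v, h, hv⟩ := L.ker t _ h
    rw [← hd] at hv
    obtain ⟨β, hβ⟩ := Ext.covariant_sequence_exact₂ (X := Qm a v) hS (n := i+1) (pb a h α) hv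
    obtain ⟨w, h', hw⟩ := V a i T hT v β
    refine ⟨w, h.trans h', ?_⟩
    rw [← pb_trans a h h']
    refine (congrArg (pb a h') hβ.symm).trans ?_
    exact pb_comp_zero a h' (Y := (sc f g hfg).X₁) β (Ext.mk₀ (sc f g hfg).f) (add_zero _) hw

theorem zero_FE {X N : Type u} [AddCommGroup X] [Module R X] [AddCommGroup N] [Module R N] (i : ℕ)
    (h : ∀ α : Ext (ModuleCat.of R X) (ModuleCat.of R N) i, α = 0) : FE R X N i := by
  have : Subsingleton (Ext (ModuleCat.of R X) (ModuleCat.of R N) i) := ⟨fun x y => by rw [h x, h y]⟩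
  exact Module.Finite.of_finite

theorem quot_ext0' (a : Ideal R) (N : Type u) [AddCommGroup N] [Module R N]
    (α : Ext (ModuleCat.of R (R ⧸ a)) (ModuleCat.of R (N ⧸ gam a N)) 0) : α = 0 := by
  apply ext0_zero_iff
  apply tor_quot_gam a N 1
  intro r hr
  rw [pow_one] at hr
  rw [← LinearMap.smul_apply, ← map_smul, zero_act _ hr, map_zero, LinearMap.zero_apply]

theorem gam_CF (a : Ideal R) (hdim : ringKrullDim (R ⧸ a) = 1) (M : Type u) [AddCommGroup M] [Module R M]
    (hM : CF a M) : CF a (gam a M) := by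
  have hex : Function.Exact (gam a M).subtype (gam a M).mkQ := LinearMap.exact_subtype_mkQ _
  refine keyK a hdim ⊥ _ (fun r hr y => by rw [Ideal.mem_bot.1 hr, zero_smul]) (gam_tors a M) ?_ ?_
  · exact FE0_inj a (gam a M).subtype (Submodule.injective_subtype _) (hM 0)
  · exact cov_left _ _ (Submodule.injective_subtype _) (Submodule.mkQ_surjective _) hex 0
      (zero_FE 0 (quot_ext0' a M)) (hM 1)

theorem main (a : Ideal R) (hdim : ringKrullDim (R ⧸ a) = 1) (i : ℕ) : ∀ (M : Type u) [AddCommGroup M] [Module R M],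
    CF a M → ∃ (H : Type u) (_ : AddCommGroup H) (_ : Module R H), CF a H ∧ Nonempty (LC a i M H) := by
  induction i with
  | zero =>
    intro M _ _ hM
    exact ⟨gam a M, inferInstance, inferInstance, gam_CF a hdim M hM, LC0 a M⟩
  | succ i ih =>
    intro M _ _ hM
    have hex : Function.Exact (gam a M).subtype (gam a M).mkQ := LinearMap.exact_subtype_mkQ _
    have hG := gam_CF a hdim M hM
    have hM1 : CF a (M ⧸ gam a M) := fun j => cov_right _ _ (Submodule.injective_subtype _)
      (Submodule.mkQ_surjective _) hex j (hM j) (hG (j+1))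
    obtain ⟨E, _, _, _, j, hj⟩ := exists_inj (R := R) M
    have hE := quot_gam_injective a E
    have hle : gam a M ≤ (gam a E).comap j := by
      rintro y ⟨n, hn⟩
      exact ⟨n, fun r hr => by rw [← map_smul, hn r hr, map_zero]⟩
    let f : (M ⧸ gam a M) →ₗ[R] (E ⧸ gam a E) := Submodule.mapQ _ _ j hle
    have hf : Function.Injective f := by
      rw [injective_iff_map_eq_zero]
      intro y hy
      obtain ⟨y, rfl⟩ := Submodule.mkQ_surjective _ y
      have hy' : Submodule.Quotient.mk (p := gam a E) (j y) = 0 := hy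
      rw [Submodule.Quotient.mk_eq_zero] at hy'
      obtain ⟨n, hn⟩ := hy'
      rw [Submodule.mkQ_apply, Submodule.Quotient.mk_eq_zero]
      exact ⟨n, fun r hr => hj (by rw [map_smul, hn r hr, map_zero])⟩
    let g := (LinearMap.range f).mkQ
    have hfg : Function.Exact f g := LinearMap.exact_map_mkQ_range f
    have hg : Function.Surjective g := Submodule.mkQ_surjective _
    have hz : ∀ t j (α : Ext (Qm a t) (ModuleCat.of R (E ⧸ gam a E)) j), α = 0 := by
      intro t j α
      cases j with
      | zero => exact quot_ext0 a E t α
      | succ j => exact ext_inj_zero _ _ α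
    have hC : CF a ((E ⧸ gam a E) ⧸ LinearMap.range f) := by
      intro j
      refine cov_right f g hf hg hfg j (zero_FE _ (fun α => ?_)) (hM1 (j+1))
      cases j with
      | zero => exact quot_ext0' a E α
      | succ j => exact ext_inj_zero _ _ α
    obtain ⟨H, _, _, hH, ⟨L⟩⟩ := ih _ hC
    obtain ⟨L1⟩ := LC_shift a i f g hf hg hfg hz L
    exact ⟨H, inferInstance, inferInstance, hH, LC_tors a i _ _ (Submodule.injective_subtype _)
      (Submodule.mkQ_surjective _) hex (gam_tors a M) L1⟩

end E3
end Cof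


namespace Cof
section F
variable {R : Type u} [CommRing R]
open Abelian Limits Opposite

/-- The system defining local cohomology of `M`. -/
noncomputable abbrev sys (a : Ideal R) (i : ℕ) (M : ModuleCat.{u} R) : (ℕᵒᵖ)ᵒᵖ ⥤ ModuleCat.{u} R :=
  localCohomology.diagram (localCohomology.idealPowersDiagram a) i ⋙ (evaluation _ _).obj M

theorem sys_map (a : Ideal R) (i : ℕ) (M : ModuleCat.{u} R) {t v : (ℕᵒᵖ)ᵒᵖ} (w : t ⟶ v)
    (α : extModule R i (Qm a t.unop.unop) M) :
    cmp i (Qm a v.unop.unop) M (((sys a i M).map w).hom α) =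
      pb a (leOfHom w.unop.unop) (cmp i (Qm a t.unop.unop) M α) :=
  cmp_nat i (pim a (leOfHom w.unop.unop)) M α

theorem exists_equiv (a : Ideal R) (i : ℕ) (M : ModuleCat.{u} R) (H : Type u) [AddCommGroup H] [Module R H]
    (L : LC a i M H) : Nonempty ((localCohomology a i).obj M ≃ₗ[R] H) := by
  let c0 : Cocone (localCohomology.diagram (localCohomology.idealPowersDiagram a) i) := colimit.cocone _
  let c : Cocone (sys a i M) := ((evaluation _ _).obj M).mapCocone c0
  have hc : IsColimit c := isColimitOfPreserves _ (colimit.isColimit _)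
  let d : Cocone (sys a i M) :=
    { pt := ModuleCat.of R H
      ι := 
      { app := fun t => ModuleCat.ofHom ((L.φ t.unop.unop).comp (cmp i (Qm a t.unop.unop) M).toLinearMap)
        naturality := by
          intro t v w
          apply ModuleCat.hom_ext
          apply LinearMap.ext
          intro α
          change L.φ v.unop.unop (cmp i (Qm a v.unop.unop) M (((sys a i M).map w).hom α)) = L.φ _ (cmp i (Qm a t.unop.unop) M α)
          exact (congrArg (L.φ v.unop.unop) (sys_map a i M w α)).trans (L.comp _ _) } }
  let ψ : c.pt →ₗ[R] H := (hc.desc d).hom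
  have hψ : ∀ t α, ψ ((c.ι.app t).hom α) = L.φ t.unop.unop (cmp i (Qm a t.unop.unop) M α) := by
    intro t α
    exact congrArg (fun f => ModuleCat.Hom.hom f α) (hc.fac d t)
  refine ⟨LinearEquiv.ofBijective (M := c.pt) ψ ⟨?_, ?_⟩⟩
  · rw [injective_iff_map_eq_zero]
    intro x hx
    have : PreservesFilteredColimitsOfSize.{0, 0} (forget (ModuleCat.{u} R)) :=
      preservesFilteredColimitsOfSize_shrink.{0, u, 0, u} _
    obtain ⟨t, α, rfl⟩ := Concrete.isColimit_exists_rep (sys a i M) hc x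
    erw [hψ] at hx
    obtain ⟨v, h, hv⟩ := L.ker _ _ hx
    let w : t ⟶ op (op v) := (homOfLE h).op.op
    have h1 : ((sys a i M).map w).hom α = 0 := by
      apply (cmp i (Qm a v) M).injective
      exact ((sys_map a i M w α).trans hv).trans (map_zero (cmp i (Qm a v) M)).symm
    have h2 : (c.ι.app t).hom α = (c.ι.app (op (op v))).hom (((sys a i M).map w).hom α) := by
      rw [← c.w w]; rfl
    refine h2.trans ?_
    rw [h1, map_zero]
  · intro y
    obtain ⟨t, α, rfl⟩ := L.surj y
    refine ⟨(c.ι.app (op (op t))).hom ((cmp i (Qm a t) M).symm α), ?_⟩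
    refine (hψ _ _).trans ?_
    exact congrArg (L.φ t) ((cmp i (Qm a t) M).apply_symm_apply α)

theorem supp_tors (a : Ideal R) (H : Type u) [AddCommGroup H] [Module R H] (h : TorsA a H) :
    Module.support R H ⊆ PrimeSpectrum.zeroLocus (a : Set R) := by
  intro p hp
  rw [Module.mem_support_iff_exists_annihilator] at hp
  obtain ⟨y, hy⟩ := hp
  obtain ⟨n, hn⟩ := h y
  intro r hr
  refine p.2.mem_of_pow_mem n (hy ?_)
  rw [Submodule.mem_annihilator_span_singleton]
  exact hn _ (Ideal.pow_mem_pow hr n)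

theorem final [IsNoetherianRing R] (a b : Ideal R) (hrad : b ≤ a.radical)
    (hdim : ringKrullDim (R ⧸ a) = 1) (M : ModuleCat.{u} R)
    (h : IsCofinite R b M) (i : ℕ) : IsCofinite R a ((localCohomology a i).obj M) := by
  have hb : ∀ j, FE R (R ⧸ b) M j := fun j =>
    (Module.Finite.equiv_iff (cmp j (ModuleCat.of R (R ⧸ b)) M)).1 (h.2 j)
  have ha : CF a M := by
    intro j
    obtain ⟨n, hn⟩ := Ideal.exists_pow_le_of_le_radical_of_fg hrad (IsNoetherian.noetherian b)
    refine ext_transfer b M hb j (R ⧸ a) inferInstance ⟨n, fun r hr x => ?_⟩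
    obtain ⟨x, rfl⟩ := Ideal.Quotient.mk_surjective x
    rw [Algebra.smul_def, Ideal.Quotient.algebraMap_eq, ← map_mul, Ideal.Quotient.eq_zero_iff_mem]
    exact a.mul_mem_right _ (hn hr)
  obtain ⟨H, _, _, hH, ⟨L⟩⟩ := main a hdim i M ha
  obtain ⟨e⟩ := exists_equiv a i M H L
  constructor
  · exact supp_tors a _ (L.tors.of_inj e.toLinearMap e.injective)
  · intro j
    exact (Module.Finite.equiv_iff (cmp j (ModuleCat.of R (R ⧸ a)) ((localCohomology a i).obj M))).2
      (FE_congr_right e.symm j (hH j))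

end F
end Cof

theorem stmt9 [IsNoetherianRing R] (𝔞 𝔟 : Ideal R) (hrad : 𝔟 ≤ 𝔞.radical)
    (hdim : ringKrullDim (R ⧸ 𝔞) = 1) (M : ModuleCat.{u} R)
    (h : IsCofinite R 𝔟 M) :
    ∀ i : ℕ, IsCofinite R 𝔞 ((localCohomology 𝔞 i).obj M) := by
  exact Cof.final 𝔞 𝔟 hrad hdim M h
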